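/- arXiv:2101.04398 — 6 statements merged into one kernel-verified Lean document; each statement's English description precedes it below -/
import Mathlib

section
/- Let G be a torsion-free abelian group and let K be a field. Let g ∈ G be an element of height (0,0,0,…), i.e., for every prime number p the equation p·x = g has no solution x ∈ G, and let a, b ∈ K \ {0}. Then the element a + b·X^g is irreducible in the group algebra K[G]. -/
/-!
Over an integral domain `R`, write `a + b·X^g = b·(X^g - c)` with `c = -a/b`. The height condition
makes `G ⧸ ⟨g⟩` torsion-free, so `L[G ⧸ ⟨g⟩]` is a domain for every field `L`. Taking for `L` an
algebraic closure of the fraction field of `R`, the group `Lˣ` is divisible, so there is a character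
`χ : G → Lˣ` with `χ g = c`. Then `X^u ↦ χ(u)·X^(u + ⟨g⟩)` is a ring homomorphism
`R[G] → L[G ⧸ ⟨g⟩]` whose kernel is generated by `X^g - c`: modulo `X^g - c` every element is an
`R`-combination of the `X^s` with `s` in a transversal of `⟨g⟩`, and on such combinations the
homomorphism is injective. Hence `X^g - c` is even prime.
-/

section TorsionFree

variable {G : Type*} [AddCommGroup G] [IsAddTorsionFree G]

theorem twoUniqueSums_of_isAddTorsionFree : TwoUniqueSums G :=
  TwoUniqueSums.of_injective_addHom (DivisibleHull.coeAddMonoidHom G).toAddHom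
    DivisibleHull.coe_injective inferInstance

theorem mem_zmultiples_of_prime_nsmul_mem {g x : G} {p : ℕ} (hp : p.Prime)
    (hg : ∀ y : G, p • y ≠ g) (hx : p • x ∈ AddSubgroup.zmultiples g) :
    x ∈ AddSubgroup.zmultiples g := by
  obtain ⟨m, hm : m • g = p • x⟩ := hx
  by_cases hpm : (p : ℤ) ∣ m
  · obtain ⟨k, rfl⟩ := hpm
    refine ⟨k, nsmul_right_injective hp.ne_zero ?_⟩
    simpa only [mul_smul, natCast_zsmul] using hm
  · obtain ⟨r, s, hrs⟩ := (Nat.prime_iff_prime_int.mp hp).coprime_iff_not_dvd.mpr hpm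
    refine absurd ?_ (hg (r • g + s • x))
    calc p • (r • g + s • x) = (r * p) • g + s • (p • x) := by module
      _ = (r * p + s * m) • g := by rw [← hm]; module
      _ = g := by rw [hrs, one_smul]

theorem isAddTorsionFree_quotient_zmultiples {g : G}
    (hg : ∀ p : ℕ, p.Prime → ∀ x : G, p • x ≠ g) :
    IsAddTorsionFree (G ⧸ AddSubgroup.zmultiples g) := by
  have mem_of_nsmul_mem (n : ℕ) : n ≠ 0 → ∀ x : G, n • x ∈ AddSubgroup.zmultiples g →
      x ∈ AddSubgroup.zmultiples g := by
    induction n using induction_on_primes with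
    | zero => exact fun h => absurd rfl h
    | one => simp
    | prime_mul p n hp ih =>
      intro hpn x hx
      rw [mul_smul] at hx
      exact ih (right_ne_zero_of_mul hpn) x (mem_zmultiples_of_prime_nsmul_mem hp (hg p hp) hx)
  refine .of_not_isOfFinAddOrder fun q hq hfin => hq ?_
  obtain ⟨x, rfl⟩ := QuotientAddGroup.mk_surjective q
  obtain ⟨n, hn, hnx⟩ := isOfFinAddOrder_iff_nsmul_eq_zero.mp hfin
  rw [← QuotientAddGroup.mk_nsmul, QuotientAddGroup.eq_zero_iff] at hnx
  exact (QuotientAddGroup.eq_zero_iff x).mpr (mem_of_nsmul_mem n hn.ne' x hnx)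

end TorsionFree

section Characters

theorem exists_addMonoidHom_apply_eq {G A : Type*} [AddCommGroup G] [AddCommGroup A]
    [DivisibleBy A ℤ] {g : G} (hg : ¬IsOfFinAddOrder g) (a : A) : ∃ χ : G →+ A, χ g = a := by
  obtain ⟨χ, hχ⟩ := (Module.Baer.of_divisible A).extension_property_addMonoidHom
    (zmultiplesHom G g) (injective_zsmul_iff_not_isOfFinAddOrder.mpr hg) (zmultiplesHom A a)
  exact ⟨χ, by simpa using DFunLike.congr_fun hχ 1⟩

theorem exists_units_pow_eq {L : Type*} [Field L] [IsAlgClosed L] {n : ℕ} (hn : n ≠ 0) (u : Lˣ) :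
    ∃ v : Lˣ, v ^ n = u := by
  obtain ⟨z, hz⟩ := IsAlgClosed.exists_pow_nat_eq (u : L) (Nat.pos_of_ne_zero hn)
  have hz0 : z ≠ 0 := by
    rintro rfl
    exact u.ne_zero (by rw [← hz, zero_pow hn])
  exact ⟨Units.mk0 z hz0, Units.ext hz⟩

theorem exists_monoidHom_units_apply_eq {G L : Type*} [AddCommGroup G] [Field L] [IsAlgClosed L]
    {g : G} (hg : ¬IsOfFinAddOrder g) (c : Lˣ) :
    ∃ χ : Multiplicative G →* Lˣ, χ (.ofAdd g) = c := by
  let : DivisibleBy (Additive Lˣ) ℕ := divisibleByOfSMulRightSurj _ _ fun hn u =>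
    exists_units_pow_eq hn u.toMul
  let : DivisibleBy (Additive Lˣ) ℤ := AddGroup.divisibleByIntOfDivisibleByNat _
  obtain ⟨χ, hχ⟩ := exists_addMonoidHom_apply_eq hg (Additive.ofMul c)
  exact ⟨χ.toMultiplicativeLeft, congrArg Additive.toMul hχ⟩

end Characters

section TwistedQuotient

open AddMonoidAlgebra

variable {R G : Type*} [CommRing R] [AddCommGroup G]

theorem single_sub_single_dvd_single_zsmul_sub_single_zpow (g : G) (c : Rˣ) (k : ℤ) :
    (single g 1 - single 0 (c : R) : R[G]) ∣ single (k • g) 1 - single 0 ((c ^ k : Rˣ) : R) := by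
  let π := Ideal.Quotient.mk (Ideal.span {(single g 1 - single 0 (c : R) : R[G])})
  let powX : Multiplicative ℤ →* R[G] :=
    (of R G).comp (AddMonoidHom.toMultiplicative (zmultiplesHom G g))
  let powC : Multiplicative ℤ →* R[G] :=
    (singleZeroRingHom : R →+* R[G]).toMonoidHom.comp ((Units.coeHom R).comp (zpowersHom Rˣ c))
  have hpow : π.toMonoidHom.comp powX = π.toMonoidHom.comp powC := by
    refine MonoidHom.ext_mint ?_
    have : π (single g 1) = π (single 0 (c : R)) :=
      Ideal.Quotient.eq.mpr (Ideal.mem_span_singleton_self _)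
    simpa [powX, powC] using this
  refine Ideal.mem_span_singleton.mp (Ideal.Quotient.eq.mp ?_)
  simpa [powX, powC] using DFunLike.congr_fun hpow (Multiplicative.ofAdd k)

theorem exists_dvd_sub_mapDomain_out (g : G) (c : Rˣ) (f : R[G]) :
    ∃ ψ : R[G ⧸ AddSubgroup.zmultiples g],
      (single g 1 - single 0 (c : R) : R[G]) ∣ f - mapDomain Quotient.out ψ := by
  induction f using AddMonoidAlgebra.induction_linear with
  | zero => exact ⟨0, by simp⟩
  | add f₁ f₂ h₁ h₂ =>
    obtain ⟨ψ₁, h₁⟩ := h₁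
    obtain ⟨ψ₂, h₂⟩ := h₂
    exact ⟨ψ₁ + ψ₂, by simpa only [mapDomain_add, add_sub_add_comm] using dvd_add h₁ h₂⟩
  | single u r =>
    set s : G := (u : G ⧸ AddSubgroup.zmultiples g).out
    obtain ⟨k, hk : k • g = -s + u⟩ : -s + u ∈ AddSubgroup.zmultiples g :=
      QuotientAddGroup.eq.mp (QuotientAddGroup.out_eq' _)
    refine ⟨single u (r * (c ^ k : Rˣ)), ?_⟩
    have hfactor : (single u r : R[G]) - single s (r * (c ^ k : Rˣ)) =
        single s r * (single (k • g) 1 - single 0 ((c ^ k : Rˣ) : R)) := by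
      simp [mul_sub, single_mul_single, hk]
    rw [mapDomain_single, hfactor]
    exact (single_sub_single_dvd_single_zsmul_sub_single_zpow g c k).mul_left _

variable {L : Type*} [CommRing L] [Algebra R L]

variable (R) in
/-- The quotient map `R[G] → L[G ⧸ H]` twisted by a character `χ` of `G`: it sends `X^u` to
`χ(u)·X^(u + H)`. As `χ` takes values in units, its domain is `G` written multiplicatively. -/
noncomputable def twistedQuotientMap (χ : Multiplicative G →* Lˣ) (H : AddSubgroup G) :
    R[G] →ₐ[R] L[G ⧸ H] :=
  lift R L[G ⧸ H] G
    { toFun u := single (u.toAdd : G ⧸ H) (χ u : L)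
      map_one' := by simp [one_def]
      map_mul' u v := by simp [single_mul_single] }

theorem twistedQuotientMap_single (χ : Multiplicative G →* Lˣ) (H : AddSubgroup G) (u : G) (r : R) :
    twistedQuotientMap R χ H (single u r) = single (u : G ⧸ H) (r • (χ (.ofAdd u) : L)) := by
  simp [twistedQuotientMap]

theorem coeff_twistedQuotientMap_mapDomain_out (χ : Multiplicative G →* Lˣ) (H : AddSubgroup G)
    (ψ : R[G ⧸ H]) (q : G ⧸ H) :
    (twistedQuotientMap R χ H (mapDomain Quotient.out ψ)).coeff q =
      ψ.coeff q • (χ (.ofAdd q.out) : L) := by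
  induction ψ using AddMonoidAlgebra.induction_linear with
  | zero => simp
  | add ψ₁ ψ₂ h₁ h₂ => simp [mapDomain_add, h₁, h₂, add_smul]
  | single q' r =>
    rw [mapDomain_single, twistedQuotientMap_single, QuotientAddGroup.out_eq']
    by_cases h : q' = q <;> simp [h]

theorem twistedQuotientMap_mapDomain_out_injective [FaithfulSMul R L]
    (χ : Multiplicative G →* Lˣ) (H : AddSubgroup G) :
    Function.Injective fun ψ : R[G ⧸ H] => twistedQuotientMap R χ H (mapDomain Quotient.out ψ) := by
  intro ψ₁ ψ₂ h
  ext q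
  have hq := congrArg (fun f => f.coeff q) h
  simp only [coeff_twistedQuotientMap_mapDomain_out, Algebra.smul_def, Units.mul_left_inj] at hq
  exact FaithfulSMul.algebraMap_injective R L hq

theorem ker_twistedQuotientMap [FaithfulSMul R L] {g : G} {c : Rˣ} {χ : Multiplicative G →* Lˣ}
    (hχ : (χ (.ofAdd g) : L) = algebraMap R L c) :
    RingHom.ker (twistedQuotientMap R χ (AddSubgroup.zmultiples g)) =
      Ideal.span {(single g 1 - single 0 (c : R) : R[G])} := by
  have hgen : twistedQuotientMap R χ (AddSubgroup.zmultiples g)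
      (single g 1 - single 0 (c : R)) = 0 := by
    have hg : (g : G ⧸ AddSubgroup.zmultiples g) = 0 :=
      (QuotientAddGroup.eq_zero_iff g).mpr (AddSubgroup.mem_zmultiples g)
    simp [twistedQuotientMap_single, hχ, hg, Algebra.smul_def]
  have hdvd {f : R[G]} (hf : (single g 1 - single 0 (c : R) : R[G]) ∣ f) :
      twistedQuotientMap R χ (AddSubgroup.zmultiples g) f = 0 := by
    obtain ⟨f', rfl⟩ := hf
    rw [map_mul, hgen, zero_mul]
  ext f
  rw [RingHom.mem_ker, Ideal.mem_span_singleton]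
  refine ⟨fun hf => ?_, hdvd⟩
  obtain ⟨ψ, hψ⟩ := exists_dvd_sub_mapDomain_out g c f
  have hψ0 : ψ = 0 := by
    refine twistedQuotientMap_mapDomain_out_injective (R := R) χ _ ?_
    have := hdvd hψ
    rw [map_sub, hf, zero_sub, neg_eq_zero] at this
    simpa using this
  simpa [hψ0] using hψ

end TwistedQuotient

section Prime

open AddMonoidAlgebra

variable {R G : Type*} [CommRing R] [IsDomain R] [AddCommGroup G] {g : G}

theorem prime_single_sub_single [UniqueSums (G ⧸ AddSubgroup.zmultiples g)]
    (hg : ¬IsOfFinAddOrder g) (c : Rˣ) :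
    Prime (single g 1 - single 0 (c : R) : R[G]) := by
  let L := AlgebraicClosure (FractionRing R)
  have : FaithfulSMul R L := .trans R (FractionRing R) L
  obtain ⟨χ, hχ⟩ := exists_monoidHom_units_apply_eq hg (Units.map (algebraMap R L).toMonoidHom c)
  have hne : (single g 1 - single 0 (c : R) : R[G]) ≠ 0 := by
    have hg0 : g ≠ 0 := fun h => hg (h ▸ IsOfFinAddOrder.zero)
    intro h
    simpa [hg0, Finsupp.single_apply] using congrArg (fun f => f.coeff g) h
  rw [← Ideal.span_singleton_prime hne,
    ← ker_twistedQuotientMap (L := L) (congrArg Units.val hχ)]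
  exact RingHom.ker_isPrime _

theorem matsuda_lemma_general [IsAddTorsionFree G]
    (hg : ∀ p : ℕ, p.Prime → ∀ x : G, p • x ≠ g) {a b : R} (ha : IsUnit a) (hb : IsUnit b) :
    Prime (single 0 a + single g b : R[G]) := by
  have hg0 : g ≠ 0 := fun h => hg 2 Nat.prime_two 0 (by rw [h, smul_zero])
  have := isAddTorsionFree_quotient_zmultiples hg
  have : TwoUniqueSums (G ⧸ AddSubgroup.zmultiples g) := twoUniqueSums_of_isAddTorsionFree
  obtain ⟨a, rfl⟩ := ha
  obtain ⟨b, rfl⟩ := hb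
  have hfactor : (single 0 (a : R) + single g (b : R) : R[G]) =
      single 0 (b : R) * (single g 1 - single 0 ((-(b⁻¹ * a) : Rˣ) : R)) := by
    simp [mul_add, single_mul_single, add_comm]
  have hunit : IsUnit (single 0 (b : R) : R[G]) := b.isUnit.map (singleZeroRingHom : R →+* R[G])
  rw [hfactor, ← (associated_unit_mul_right _ _ hunit).prime_iff]
  exact prime_single_sub_single (not_isOfFinAddOrder_of_isAddTorsionFree hg0) _

end Prime

/-- **Lemma (Matsuda).** Let `G` be a torsion-free abelian group, `K` a field, `g ∈ G`
an element of height `(0,0,0,…)` (i.e. `p • x = g` has no solution for any prime `p`),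
and `a, b ∈ K \ {0}`. Then `a + b·X^g` is irreducible in the group algebra `K[G]`. -/
theorem matsuda_lemma {K : Type*} [Field K] {G : Type*} [AddCommGroup G]
    (htf : IsAddTorsionFree G)
    (g : G) (hg : ∀ p : ℕ, p.Prime → ∀ x : G, p • x ≠ g)
    (a b : K) (ha : a ≠ 0) (hb : b ≠ 0) :
    Irreducible (AddMonoidAlgebra.single (0 : G) a + AddMonoidAlgebra.single g b) := by
  have : TwoUniqueSums G := twoUniqueSums_of_isAddTorsionFree
  exact (matsuda_lemma_general hg ha.isUnit hb.isUnit).irreducible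
end

section
/- Let D be a Krull domain with quotient field K, let S be a Krull monoid with quotient group G, and suppose the monoid algebra D[S] is a Krull domain. Then for every nonzero f ∈ K[G] one has f·K[G] ∩ D[S] = f·A_f^{-1}[E_f^{-1}], where A_f is the fractional ideal of D generated by the nonzero coefficients of f and E_f is the fractional ideal of S generated by the exponents of f. -/
open scoped nonZeroDivisors

noncomputable section

/-- A height-one prime ideal (prime divisor) of a commutative ring:
a nonzero prime ideal that is minimal among nonzero prime ideals. -/
def IsHeightOnePrime {R : Type*} [CommRing R] (P : Ideal R) : Prop :=
  P.IsPrime ∧ P ≠ ⊥ ∧ ∀ Q : Ideal R, Q.IsPrime → Q ≠ ⊥ → Q ≤ P → Q = P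

/-- The divisorial (v-)closure `I_v = (R : (R : I))` of a fractional ideal. -/
def divClosure {R : Type*} [CommRing R] [IsDomain R] {K : Type*} [Field K] [Algebra R K]
    [IsFractionRing R K] (I : FractionalIdeal R⁰ K) : FractionalIdeal R⁰ K :=
  1 / (1 / I)

/-- A Krull domain: a domain that is completely integrally closed and satisfies the
ascending chain condition on (integral) divisorial ideals. -/
def IsKrullDomain (R : Type*) [CommRing R] [IsDomain R] : Prop :=
  (∀ x : FractionRing R,
      (∃ c : R, c ≠ 0 ∧ ∀ n : ℕ,
          IsLocalization.IsInteger R (algebraMap R (FractionRing R) c * x ^ n)) →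
      IsLocalization.IsInteger R x) ∧
  (∀ f : ℕ → Ideal R,
      (∀ n, divClosure (f n : FractionalIdeal R⁰ (FractionRing R)) =
        (f n : FractionalIdeal R⁰ (FractionRing R))) →
      (∀ n, f n ≤ f (n + 1)) → ∃ n, ∀ m, n ≤ m → f m = f n)

/-- Every divisor class of the Krull domain `R` (i.e. every class of v-invertible divisorial
fractional ideals modulo principal ones) contains infinitely many height-one prime ideals. -/
def HasInfinitelyManyPrimeDivisorsInEachClass (R : Type*) [CommRing R] [IsDomain R] : Prop :=
  ∀ I : FractionalIdeal R⁰ (FractionRing R), I ≠ 0 → divClosure I = I →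
    divClosure (I * (1 / I)) = 1 →
    {P : Ideal R | IsHeightOnePrime P ∧ ∃ c : FractionRing R, c ≠ 0 ∧
      (P : FractionalIdeal R⁰ (FractionRing R)) =
        divClosure (FractionalIdeal.spanSingleton R⁰ c * I)}.Infinite

/-- The dual `(S : X) = {g : G | g + X ⊆ S}` of a subset `X` of the quotient group,
with respect to a submonoid `S`. -/
def monDual {G : Type*} [AddCommGroup G] (S : AddSubmonoid G) (X : Set G) : Set G :=
  {g : G | ∀ x ∈ X, g + x ∈ S}

/-- A Krull monoid (given as a submonoid of an abelian group which is its quotient group):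
completely integrally closed and ACC on divisorial ideals. -/
def IsKrullMonoid {G : Type*} [AddCommGroup G] (S : AddSubmonoid G) : Prop :=
  (∀ g : G, (∃ c ∈ S, ∀ n : ℕ, c + n • g ∈ S) → g ∈ S) ∧
  (∀ f : ℕ → Set G, (∀ n, f n ⊆ (S : Set G)) → (∀ n, monDual S (monDual S (f n)) = f n) →
      (∀ n, f n ⊆ f (n + 1)) → ∃ n, ∀ m, n ≤ m → f m = f n)

/-- For subsets `A ⊆ K` and `E ⊆ G`, the set `A[E]` of all finite sums
`Σ pᵢ X^{hᵢ}` with `pᵢ ∈ A` and `hᵢ ∈ E`, inside the monoid algebra `K[G]`. -/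
def mixedSpan {K G : Type*} [Semiring K] [AddCommMonoid G] (A : Set K) (E : Set G) :
    Set (AddMonoidAlgebra K G) :=
  {x | ∃ (n : ℕ) (p : Fin n → K) (h : Fin n → G),
    (∀ i, p i ∈ A) ∧ (∀ i, h i ∈ E) ∧ x = ∑ i, AddMonoidAlgebra.single (h i) (p i)}

/-!
By Gauss's lemma a valuation on the coefficients sends `f * y` to the product of its maxima on `f`
and `y`: among the exponents where the maxima are attained, some sum `a + b` is attained only once.
An integral closure is an intersection of valuation rings, so Kronecker's theorem follows: if the
coefficients of `f * y` are integral over `R`, so is every product `f_s y_t`.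

Kronecker's theorem over `D` says that `A_f · A_y ⊆ D` as soon as `f * y` has coefficients in `D`.
For exponents it is applied to `∑ d_s X ^ s ↦ ∑ (d_s X ^ s) X ^ s`, from `K[G]` to `K[G][G]`: if
`f * y ∈ K[S]`, then the monomials `f_s y_t X ^ (s + t)` are integral over `K[S]`, and the integral
equation of a monomial `d X ^ g`, read in degree `n • g`, shows that `k • g ∈ S` for some `k > 0`,
so `g ∈ S` because a Krull monoid contains the roots of its elements.
-/

open AddMonoidAlgebra

section Gauss

variable {R Γ₀ G : Type*} [Ring R] [LinearOrderedCommGroupWithZero Γ₀]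

open Classical in
/-- The exponents at which the coefficient of `f` has maximal valuation. Over a valued field,
this is the support of the reduction of `f` once `f` is scaled to have Gauss valuation one. -/
def maxValuationSupport (v : Valuation R Γ₀) (f : R[G]) : Finset G :=
  {a ∈ f.coeff.support | ∀ s, v (f.coeff s) ≤ v (f.coeff a)}

variable (v : Valuation R Γ₀) {f y : R[G]}

theorem mem_maxValuationSupport {a : G} :
    a ∈ maxValuationSupport v f ↔ f.coeff a ≠ 0 ∧ ∀ s, v (f.coeff s) ≤ v (f.coeff a) := by
  simp [maxValuationSupport]

theorem maxValuationSupport_nonempty (hf : f ≠ 0) : (maxValuationSupport v f).Nonempty := by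
  obtain ⟨a, ha, hmax⟩ := f.coeff.support.exists_max_image (fun s => v (f.coeff s))
    (Finsupp.support_nonempty_iff.2 (coeff_eq_zero.not.2 hf))
  refine ⟨a, (mem_maxValuationSupport v).2 ⟨Finsupp.mem_support_iff.1 ha, fun s => ?_⟩⟩
  by_cases hs : s ∈ f.coeff.support
  · exact hmax s hs
  · simp [Finsupp.notMem_support_iff.1 hs]

variable [Add G]

theorem valuation_coeff_mul_of_uniqueAdd {a b : G} (ha : a ∈ maxValuationSupport v f)
    (hb : b ∈ maxValuationSupport v y) (hva : 0 < v (f.coeff a)) (hvb : 0 < v (y.coeff b))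
    (hab : UniqueAdd (maxValuationSupport v f) (maxValuationSupport v y) a b) :
    v ((f * y).coeff (a + b)) = v (f.coeff a) * v (y.coeff b) := by
  classical
  obtain ⟨hfa, hmaxa⟩ := (mem_maxValuationSupport v).1 ha
  obtain ⟨hyb, hmaxb⟩ := (mem_maxValuationSupport v).1 hb
  have hsum : (f * y).coeff (a + b) = ∑ p ∈ f.coeff.support ×ˢ y.coeff.support,
      if p.1 + p.2 = a + b then f.coeff p.1 * y.coeff p.2 else 0 := by
    rw [coeff_mul, Finset.sum_product]
    rfl
  rw [hsum, v.map_sum_eq_of_lt (j := (a, b)) (Finset.mk_mem_product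
    (Finsupp.mem_support_iff.2 hfa) (Finsupp.mem_support_iff.2 hyb)), if_pos rfl, map_mul]
  rintro ⟨s, t⟩ hst
  simp only [Finset.mem_sdiff, Finset.mem_product, Finsupp.mem_support_iff,
    Finset.mem_singleton] at hst
  obtain ⟨⟨hs, ht⟩, hne⟩ := hst
  rw [if_pos rfl, map_mul]
  split_ifs with hadd
  · rw [map_mul]
    refine (mul_le_mul' (hmaxa s) (hmaxb t)).lt_of_ne fun heq => hne ?_
    have hvs : 0 < v (f.coeff s) :=
      zero_lt_iff.2 (left_ne_zero_of_mul (heq ▸ (mul_pos hva hvb).ne'))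
    obtain ⟨hvsa, hvtb⟩ :=
      (mul_eq_mul_iff_eq_and_eq_of_pos (hmaxa s) (hmaxb t) hvs hvb).1 heq
    exact Prod.ext_iff.2 <| hab ((mem_maxValuationSupport v).2 ⟨hs, hvsa ▸ hmaxa⟩)
      ((mem_maxValuationSupport v).2 ⟨ht, hvtb ▸ hmaxb⟩) hadd
  · simpa only [map_zero] using mul_pos hva hvb

theorem valuation_coeff_mul_coeff_le [UniqueSums G] {γ : Γ₀}
    (h : ∀ g, v ((f * y).coeff g) ≤ γ) (s t : G) : v (f.coeff s * y.coeff t) ≤ γ := by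
  rcases eq_or_ne (v (f.coeff s * y.coeff t)) 0 with hzero | hne
  · exact hzero ▸ zero_le
  rw [map_mul] at hne ⊢
  have hf : f ≠ 0 := by rintro rfl; simp at hne
  have hy : y ≠ 0 := by rintro rfl; simp at hne
  obtain ⟨a, ha, b, hb, hab⟩ := UniqueSums.uniqueAdd_of_nonempty
    (maxValuationSupport_nonempty v hf) (maxValuationSupport_nonempty v hy)
  have hsa := ((mem_maxValuationSupport v).1 ha).2 s
  have htb := ((mem_maxValuationSupport v).1 hb).2 t
  calc v (f.coeff s) * v (y.coeff t)
      ≤ v (f.coeff a) * v (y.coeff b) := mul_le_mul' hsa htb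
    _ = v ((f * y).coeff (a + b)) := (valuation_coeff_mul_of_uniqueAdd v ha hb
        ((zero_lt_iff.2 (left_ne_zero_of_mul hne)).trans_le hsa)
        ((zero_lt_iff.2 (right_ne_zero_of_mul hne)).trans_le htb) hab).symm
    _ ≤ γ := h _

end Gauss

theorem isIntegral_coeff_mul_coeff {R A G : Type*} [CommRing R] [CommRing A] [IsDomain A]
    [Algebra R A] [Add G] [UniqueSums G] {f y : A[G]}
    (h : ∀ g, IsIntegral R ((f * y).coeff g)) (s t : G) :
    IsIntegral R (f.coeff s * y.coeff t) := by
  let L := FractionRing A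
  rw [← isIntegral_algebraMap_iff (FaithfulSMul.algebraMap_injective A L)]
  suffices algebraMap A L (f.coeff s * y.coeff t) ∈ (integralClosure R L).toSubring from this
  rw [Subring.eq_iInf_of_isIntegrallyClosedIn (R := (integralClosure R L).toSubring),
    Subring.mem_iInf]
  rintro ⟨V, hV⟩
  refine (V.valuation_le_one_iff _).1 <|
    valuation_coeff_mul_coeff_le (V.valuation.comap (algebraMap A L)) (fun g => ?_) s t
  exact (V.valuation_le_one_iff _).2 <| hV (h g).algebraMap

theorem exists_add_eq_of_mem_support_coeff_mul {R G : Type*} [Semiring R] [Add G] {x y : R[G]}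
    {g : G} (hg : g ∈ (x * y).coeff.support) :
    ∃ s ∈ x.coeff.support, ∃ t ∈ y.coeff.support, s + t = g := by
  classical
  exact Finset.mem_add.1 (support_coeff_mul_subset x y hg)

section Exponents

variable {K G : Type*}

section Semiring

variable [CommSemiring K] [AddMonoid G]

variable (K) in
/-- The monoid algebra `K[S]`, realized inside `K[G]` as the elements supported on `S`. -/
def supportedSubalgebra (S : AddSubmonoid G) : Subalgebra K K[G] :=
  (supported K K (S : Set G)).toSubalgebra
    (fun _ hg => by
      classical
      rw [Finset.mem_coe, one_def] at hg
      rw [Finset.mem_singleton.1 (Finsupp.support_single_subset hg)]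
      exact S.zero_mem)
    (fun _ _ hx hy _ hg => by
      obtain ⟨s, hs, t, ht, rfl⟩ := exists_add_eq_of_mem_support_coeff_mul hg
      exact S.add_mem (hx hs) (hy ht))

theorem mem_supportedSubalgebra_iff {S : AddSubmonoid G} {x : K[G]} :
    x ∈ supportedSubalgebra K S ↔ (x.coeff.support : Set G) ⊆ S :=
  mem_supported

variable (K G) in
/-- The comultiplication `X ^ g ↦ X ^ g ⊗ X ^ g` of `K[G]`, with `K[G] ⊗ K[G]` written as
`K[G][G]`. The outer coefficients of the image of `f` are the monomials of `f`. -/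
def diagonal : K[G] →ₐ[K] K[G][G] :=
  lift K K[G][G] G
    { toFun g := single g.toAdd (single g.toAdd 1)
      map_one' := rfl
      map_mul' g h := by simp only [toAdd_mul, single_mul_single, mul_one] }

theorem coeff_diagonal (f : K[G]) (g : G) :
    (diagonal K G f).coeff g = single g (f.coeff g) := by
  induction f using AddMonoidAlgebra.induction_linear with
  | zero => simp
  | add x y hx hy => simp [hx, hy, single_add]
  | single a r =>
    rcases eq_or_ne a g with rfl | h <;> simp [diagonal, lift_single, smul_single, *]

end Semiring

variable [CommRing K] [AddCommGroup G] {S : AddSubmonoid G}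

theorem mem_of_isIntegral_single [IsReduced K] (hS : S.NSMulSaturated) {g : G} {d : K}
    (hd : d ≠ 0) (h : IsIntegral (supportedSubalgebra K S) (single g d)) : g ∈ S := by
  obtain ⟨p, hp, hroot⟩ := h
  by_contra hg
  have hlower : ∀ i ∈ Finset.range p.natDegree,
      (algebraMap _ K[G] (p.coeff i) * single g d ^ i).coeff (p.natDegree • g) = 0 := by
    intro i hi
    have hin := Finset.mem_range.1 hi
    have hnot : (p.natDegree - i) • g ∉ S := fun hmem =>
      (hS hmem).elim (Nat.sub_ne_zero_of_lt hin) hg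
    have hcoeff : (p.coeff i : K[G]).coeff ((p.natDegree - i) • g) = 0 :=
      Finsupp.notMem_support_iff.1 fun hmem =>
        hnot (mem_supportedSubalgebra_iff.1 (p.coeff i).2 hmem)
    rw [single_pow, coeff_mul_single_apply, ← sub_nsmul g hin.le]
    exact mul_eq_zero_of_left hcoeff _
  have htop := DFunLike.congr_fun (congrArg coeff hroot) (p.natDegree • g)
  rw [Polynomial.eval₂_eq_sum_range, coeff_sum, Finset.sum_range_succ, Finsupp.add_apply,
    Finsupp.finsetSum_apply, Finset.sum_eq_zero hlower, hp.coeff_natDegree, single_pow] at htop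
  exact pow_ne_zero p.natDegree hd (by simpa using htop)

theorem add_mem_of_mul_mem_supportedSubalgebra [IsDomain K] [UniqueSums G]
    (hS : S.NSMulSaturated) {f y : K[G]} (h : f * y ∈ supportedSubalgebra K S) {s t : G}
    (hs : f.coeff s ≠ 0) (ht : y.coeff t ≠ 0) : s + t ∈ S := by
  have hmonomial (g : G) : single g ((f * y).coeff g) ∈ supportedSubalgebra K S := by
    refine mem_supportedSubalgebra_iff.2 fun a ha => ?_
    obtain rfl := Finset.mem_singleton.1 (Finsupp.support_single_subset ha)
    exact mem_supportedSubalgebra_iff.1 h (by simpa using ha)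
  have hintegral (g : G) : IsIntegral (supportedSubalgebra K S)
      ((diagonal K G f * diagonal K G y).coeff g) := by
    rw [← map_mul, coeff_diagonal]
    exact isIntegral_algebraMap (R := supportedSubalgebra K S) (x := ⟨_, hmonomial g⟩)
  have hst := isIntegral_coeff_mul_coeff hintegral s t
  rw [coeff_diagonal, coeff_diagonal, single_mul_single] at hst
  exact mem_of_isIntegral_single hS (mul_ne_zero hs ht) hst

end Exponents

theorem mem_mixedSpan_iff {σ K G : Type*} [Semiring K] [AddCommMonoid G] [SetLike σ K]
    [AddSubmonoidClass σ K] {A : σ} {E : Set G} {x : K[G]} :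
    x ∈ mixedSpan (A : Set K) E ↔ (∀ g, x.coeff g ∈ A) ∧ (x.coeff.support : Set G) ⊆ E := by
  classical
  constructor
  · rintro ⟨n, p, h, hp, hh, rfl⟩
    simp only [coeff_sum, coeff_single]
    refine ⟨fun g => ?_, fun g hg => ?_⟩
    · rw [Finsupp.finsetSum_apply]
      refine sum_mem fun i _ => ?_
      rw [Finsupp.single_apply]
      split_ifs
      exacts [hp i, zero_mem A]
    · obtain ⟨i, -, hi⟩ := Finsupp.mem_support_finsetSum g hg
      rw [Finset.mem_singleton.1 (Finsupp.support_single_subset hi)]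
      exact hh i
  · rintro ⟨hA, hE⟩
    let e := x.coeff.support.equivFin.symm
    refine ⟨_, fun i => x.coeff (e i), fun i => e i, fun i => hA _, fun i => hE (e i).2, ?_⟩
    rw [e.sum_comp fun g => single (g : G) (x.coeff g),
      Finset.sum_coe_sort x.coeff.support fun g => single g (x.coeff g)]
    exact (sum_coeff_single x).symm

theorem mem_div_span_iff {R A : Type*} [CommSemiring R] [CommSemiring A] [Algebra R A]
    {N : Submodule R A} {X : Set A} {c : A} :
    c ∈ N / Submodule.span R X ↔ ∀ x ∈ X, c * x ∈ N :=
  Submodule.mem_div_iff_forall_mul_mem.trans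
    (Submodule.span_le (p := N.comap (LinearMap.mulLeft R c)))

theorem monDual_setOf_add {G : Type*} [AddCommGroup G] (S : AddSubmonoid G) (X : Set G) :
    monDual S {x | ∃ s ∈ X, ∃ t ∈ S, x = s + t} = monDual S X := by
  refine Set.Subset.antisymm (fun g hg s hs => hg s ⟨s, hs, 0, S.zero_mem, (add_zero s).symm⟩) ?_
  rintro g hg _ ⟨s, hs, t, ht, rfl⟩
  rw [← add_assoc]
  exact S.add_mem (hg s hs) ht

theorem IsKrullDomain.isIntegrallyClosed {D : Type*} [CommRing D] [IsDomain D]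
    (hD : IsKrullDomain D) : IsIntegrallyClosed D := by
  refine (isIntegrallyClosed_iff (FractionRing D)).2 fun {x} hx => ?_
  obtain ⟨c, hc, hcx⟩ := hx.isAlmostIntegral
  refine hD.1 x ⟨c, nonZeroDivisors.ne_zero hc, fun n => ?_⟩
  rw [← Algebra.smul_def]
  exact hcx n

theorem IsKrullMonoid.nsmulSaturated {G : Type*} [AddCommGroup G] {S : AddSubmonoid G}
    (hS : IsKrullMonoid S) (hq : ∀ x : G, ∃ a ∈ S, ∃ b ∈ S, x = a - b) :
    S.NSMulSaturated := by
  intro n g hng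
  refine n.eq_zero_or_pos.imp_right fun hn => ?_
  obtain ⟨a, ha, b, hb, rfl⟩ := hq g
  -- `n • b` is a common denominator: `n • g ∈ S` absorbs all of `m • g` but `(m % n) • g`.
  refine hS.1 _ ⟨n • b, S.nsmul_mem hb n, fun m => ?_⟩
  obtain ⟨q, r, hr, rfl⟩ : ∃ q r, r < n ∧ m = n * q + r :=
    ⟨m / n, m % n, m.mod_lt hn, (m.div_add_mod n).symm⟩
  obtain ⟨k, rfl⟩ := Nat.exists_eq_add_of_le hr.le
  have hsplit : (r + k) • b + ((r + k) * q + r) • (a - b) =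
      q • (r + k) • (a - b) + (r • a + k • b) := by
    module
  rw [hsplit]
  exact S.add_mem (S.nsmul_mem hng _) (S.add_mem (S.nsmul_mem ha _) (S.nsmul_mem hb _))

theorem uniqueSums_of_isAddTorsionFree (G : Type*) [AddCommGroup G] [IsAddTorsionFree G] :
    UniqueSums G :=
  have : TwoUniqueSums G := .of_injective_addHom
    (DivisibleHull.coeAddMonoidHom G).toAddHom DivisibleHull.coe_injective inferInstance
  inferInstance

section Chang

variable {D K G : Type*} [CommRing D] [CommRing K] [Algebra D K] [AddCommGroup G]
  {S : AddSubmonoid G}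

theorem mul_mem_mixedSpan {f y : K[G]}
    (hy : y ∈ mixedSpan
      ((1 / Submodule.span D (f.coeff '' f.coeff.support) : Submodule D K) : Set K)
      (monDual S f.coeff.support)) :
    f * y ∈ mixedSpan ((1 : Submodule D K) : Set K) (S : Set G) := by
  classical
  obtain ⟨hcoeff, hsupport⟩ := mem_mixedSpan_iff.1 hy
  refine mem_mixedSpan_iff.2 ⟨fun g => ?_, fun g hg => ?_⟩
  · rw [coeff_mul]
    refine sum_mem fun s hs => sum_mem fun t _ => ?_
    dsimp only
    split_ifs
    · rw [mul_comm]
      exact mem_div_span_iff.1 (hcoeff t) _ ⟨s, hs, rfl⟩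
    · exact zero_mem _
  · obtain ⟨s, hs, t, ht, rfl⟩ := exists_add_eq_of_mem_support_coeff_mul hg
    rw [add_comm]
    exact hsupport ht s hs

theorem mem_mixedSpan_of_mul_mem [IsDomain K] [IsIntegrallyClosedIn D K] [UniqueSums G]
    (hS : S.NSMulSaturated) {f y : K[G]}
    (h : f * y ∈ mixedSpan ((1 : Submodule D K) : Set K) (S : Set G)) :
    y ∈ mixedSpan
      ((1 / Submodule.span D (f.coeff '' f.coeff.support) : Submodule D K) : Set K)
      (monDual S f.coeff.support) := by
  obtain ⟨hcoeff, hsupport⟩ := mem_mixedSpan_iff.1 h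
  refine mem_mixedSpan_iff.2 ⟨fun t => mem_div_span_iff.2 ?_, fun t ht s hs => ?_⟩
  · rintro _ ⟨s, -, rfl⟩
    rw [mul_comm, Submodule.mem_one, ← Set.mem_range]
    refine IsIntegrallyClosedIn.isIntegral_iff.1 (isIntegral_coeff_mul_coeff (fun g => ?_) s t)
    exact IsIntegrallyClosedIn.isIntegral_iff.2 (Submodule.mem_one.1 (hcoeff g))
  · rw [add_comm]
    exact add_mem_of_mul_mem_supportedSubalgebra hS (mem_supportedSubalgebra_iff.2 hsupport)
      (Finsupp.mem_support_iff.1 hs) (Finsupp.mem_support_iff.1 ht)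

theorem chang_lemma_general [IsDomain K] [IsIntegrallyClosedIn D K] [IsAddTorsionFree G]
    (hS : S.NSMulSaturated) (f : K[G]) :
    {x : K[G] | ∃ y : K[G], x = f * y} ∩ mixedSpan (Set.range (algebraMap D K)) (S : Set G) =
      (fun y => f * y) '' mixedSpan
        {c : K | ∀ y ∈ Submodule.span D ((fun g : G => f.coeff g) '' ↑f.coeff.support),
          c * y ∈ Set.range (algebraMap D K)}
        (monDual S {x : G | ∃ s ∈ f.coeff.support, ∃ t ∈ S, x = s + t}) := by
  have := uniqueSums_of_isAddTorsionFree G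
  have hone : Set.range (algebraMap D K) = ((1 : Submodule D K) : Set K) :=
    Set.ext fun _ => Submodule.mem_one.symm
  have hinv : {c : K | ∀ y ∈ Submodule.span D (f.coeff '' f.coeff.support),
      c * y ∈ ((1 : Submodule D K) : Set K)} =
      ((1 / Submodule.span D (f.coeff '' f.coeff.support) : Submodule D K) : Set K) :=
    Set.ext fun _ => Submodule.mem_div_iff_forall_mul_mem.symm
  have hdual := monDual_setOf_add S (f.coeff.support : Set G)
  simp only [Finset.mem_coe] at hdual
  rw [hone, hinv, hdual]
  ext x
  constructor
  · rintro ⟨⟨y, rfl⟩, h⟩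
    exact ⟨y, mem_mixedSpan_of_mul_mem hS h, rfl⟩
  · rintro ⟨y, hy, rfl⟩
    exact ⟨⟨y, rfl⟩, mul_mem_mixedSpan hy⟩

end Chang

/-- **Lemma (Chang).** Let `D` be a Krull domain with quotient field `K` and `S` a Krull
monoid with quotient group `G` such that `D[S]` is a Krull domain. For `0 ≠ f ∈ K[G]`,
one has `f·K[G] ∩ D[S] = f·A_f⁻¹[E_f⁻¹]`, where `A_f` is the fractional `D`-ideal generated
by the coefficients of `f` and `E_f` is the fractional `S`-ideal generated by the exponents
of `f`; here `D[S]` and the right-hand side are viewed as subsets of `K[G]`. -/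
theorem chang_lemma {D K G : Type*} [CommRing D] [IsDomain D] [Field K] [Algebra D K]
    [IsFractionRing D K] [AddCommGroup G] (S : AddSubmonoid G)
    (hq : ∀ x : G, ∃ a ∈ S, ∃ b ∈ S, x = a - b)
    (htf : ∀ g : G, g ≠ 0 → ¬IsOfFinAddOrder g)
    [IsDomain (AddMonoidAlgebra D S)]
    (hD : IsKrullDomain D) (hS : IsKrullMonoid S)
    (hDS : IsKrullDomain (AddMonoidAlgebra D S))
    (f : AddMonoidAlgebra K G) (hf : f ≠ 0) :
    {x : AddMonoidAlgebra K G | ∃ y : AddMonoidAlgebra K G, x = f * y} ∩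
        mixedSpan (Set.range (algebraMap D K)) (S : Set G) =
      (fun y => f * y) '' mixedSpan
        {c : K | ∀ y ∈ Submodule.span D ((fun g : G => f.coeff g) '' ↑f.coeff.support),
          c * y ∈ Set.range (algebraMap D K)}
        (monDual S {x : G | ∃ s ∈ f.coeff.support, ∃ t ∈ S, x = s + t}) := by
  have := isAddTorsionFree_iff_not_isOfFinAddOrder.2 htf
  have := (isIntegrallyClosed_iff_isIntegrallyClosedIn K).1 hD.isIntegrallyClosed
  exact chang_lemma_general (hS.nsmulSaturated hq) f

end
end

section
/- Let D be a Krull domain with quotient field K ≠ D and let I be a nonzero divisorial (fractional) ideal of D. Then there exist a, b ∈ K and a height-one prime ideal P of D such that I^{-1} = (aD + bD)_v and v_P(a/b) = 1, where v_P is the P-adic valuation on K and (·)_v denotes the divisorial closure. -/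
open scoped nonZeroDivisors

noncomputable section

/-- The subset `P·D_P` of `K`: elements of the form `a / b` with `a ∈ P`, `b ∉ P`. -/
def primeLocSet (D K : Type*) [CommRing D] [Field K] [Algebra D K] (P : Ideal D) : Set K :=
  {x : K | ∃ a ∈ P, ∃ b : D, b ∉ P ∧ algebraMap D K b * x = algebraMap D K a}

/-- `v_P(x) = 1` for the normalized `P`-adic valuation at a height-one prime `P` of a Krull
domain: `x ∈ P·D_P` but `x` is not a product of two elements of `P·D_P`. -/
def valOneAt (D : Type*) {K : Type*} [CommRing D] [Field K] [Algebra D K] (P : Ideal D)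
    (x : K) : Prop :=
  x ∈ primeLocSet D K P ∧ ¬ ∃ y ∈ primeLocSet D K P, ∃ z ∈ primeLocSet D K P, x = y * z

/-! For `b ∈ I⁻¹` and a height-one prime `Q`, one has `v_Q(b) ≥ -v_Q(I)`, with equality exactly
when `b` lies outside the colon `Q / I`; this replaces all computations with valuations.

Fix a height-one prime `P` and choose `b ∈ I⁻¹` outside `P / I`, so that `v_P(b) = -v_P(I)`. Only
finitely many height-one primes `Q` satisfy `v_Q(b) > -v_Q(I)`. Avoiding these and `P` inside
`(I P⁻¹)⁻¹` yields `a` with `v_P(a) = 1 - v_P(I)` and `v_Q(a) = -v_Q(I)` at each exceptional `Q`.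
Hence `v_P(a / b) = 1`, and `(aD + bD) I` lies in no height-one prime. In a Krull domain the maximal
divisorial ideals are the height-one primes, so `((aD + bD) I)⁻¹ = D`, which forces
`I⁻¹ = (aD + bD)_v`. -/

open FractionalIdeal

section FractionalIdeals

variable {D K : Type*} [CommRing D] [Field K] [Algebra D K] [IsFractionRing D K]

theorem le_coeIdeal_or_le_coeIdeal_of_mul_le {P : Ideal D} (hP : P.IsPrime)
    {A B : FractionalIdeal D⁰ K} (hA : A ≤ 1) (hB : B ≤ 1)
    (h : A * B ≤ (P : FractionalIdeal D⁰ K)) :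
    A ≤ (P : FractionalIdeal D⁰ K) ∨ B ≤ (P : FractionalIdeal D⁰ K) := by
  obtain ⟨A, rfl⟩ := le_one_iff_exists_coeIdeal.1 hA
  obtain ⟨B, rfl⟩ := le_one_iff_exists_coeIdeal.1 hB
  simp only [← coeIdeal_mul, coeIdeal_le_coeIdeal] at h ⊢
  exact hP.mul_le.1 h

theorem spanSingleton_algebraMap_le_coeIdeal_iff {P : Ideal D} {d : D} :
    spanSingleton D⁰ (algebraMap D K d) ≤ (P : FractionalIdeal D⁰ K) ↔ d ∈ P := by
  rw [← coeIdeal_span_singleton, coeIdeal_le_coeIdeal, Ideal.span_singleton_le_iff_mem]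

theorem spanSingleton_algebraMap_le_one {d : D} :
    spanSingleton D⁰ (algebraMap D K d) ≤ 1 :=
  spanSingleton_le_iff_mem.2 (coe_mem_one _ _)

theorem spanSingleton_mul_le_iff_right {A B : FractionalIdeal D⁰ K} {c : K} (hc : c ≠ 0) :
    spanSingleton D⁰ c * A ≤ spanSingleton D⁰ c * B ↔ A ≤ B := by
  refine ⟨fun h ↦ ?_, fun h ↦ mul_le_mul_right h _⟩
  simpa [← mul_assoc, spanSingleton_mul_spanSingleton, hc] using
    mul_le_mul_right h (spanSingleton D⁰ c⁻¹)

instance fractionalIdeal_noZeroDivisors : NoZeroDivisors (FractionalIdeal D⁰ K) where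
  eq_zero_or_eq_zero_of_mul_eq_zero {I J} h := by
    simpa only [← coeToSubmodule_eq_bot, coe_mul, Submodule.mul_eq_bot] using h

variable [IsDomain D] {I J A B : FractionalIdeal D⁰ K}

theorem fractionalIdeal_inv_ne_zero (hI : I ≠ 0) : I⁻¹ ≠ 0 := by
  rintro h
  simpa [h] using bot_lt_mul_inv hI

theorem le_fractionalIdeal_inv_iff (hI : I ≠ 0) : A ≤ I⁻¹ ↔ A * I ≤ 1 :=
  le_div_iff_mul_le hI

theorem mem_fractionalIdeal_div_iff (hI : I ≠ 0) {x : K} :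
    x ∈ J / I ↔ spanSingleton D⁰ x * I ≤ J := by
  rw [← spanSingleton_le_iff_mem, le_div_iff_mul_le hI]

theorem le_fractionalIdeal_inv_sup_iff (hI : I ≠ 0) :
    A ≤ (I ⊔ J)⁻¹ ↔ A * I ≤ 1 ∧ A * J ≤ 1 := by
  rw [le_fractionalIdeal_inv_iff (ne_bot_of_le_ne_bot hI le_sup_left), sup_eq_add, mul_add,
    ← sup_eq_add, sup_le_iff]

theorem le_inv_one_sup_spanSingleton_div_iff {s c : K} (hc : c ≠ 0) :
    A ≤ (1 ⊔ spanSingleton D⁰ (s / c))⁻¹ ↔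
      A ≤ 1 ∧ A * spanSingleton D⁰ s ≤ spanSingleton D⁰ c := by
  rw [le_fractionalIdeal_inv_sup_iff (one_ne_zero (α := FractionalIdeal D⁰ K)), mul_one,
    ← spanSingleton_mul_le_iff_right (A := A * _) hc, mul_left_comm,
    spanSingleton_mul_spanSingleton, mul_div_cancel₀ _ hc, mul_one]

theorem le_divClosure : I ≤ divClosure I := by
  obtain rfl | hI := eq_or_ne I 0
  · exact zero_le _
  · exact (le_fractionalIdeal_inv_iff (fractionalIdeal_inv_ne_zero hI)).2 mul_one_div_le_one

theorem inv_divClosure : (divClosure I)⁻¹ = I⁻¹ := by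
  obtain rfl | hI := eq_or_ne I 0
  · simp [divClosure]
  · exact (inv_anti_mono hI (ne_bot_of_le_ne_bot hI le_divClosure) le_divClosure).antisymm
      le_divClosure

theorem divClosure_inv : divClosure I⁻¹ = I⁻¹ :=
  inv_divClosure

theorem divClosure_mono (h : I ≤ J) : divClosure I ≤ divClosure J := by
  obtain rfl | hI := eq_or_ne I 0
  · simp [divClosure]
  · have hJ : J ≠ 0 := ne_bot_of_le_ne_bot hI h
    exact inv_anti_mono (fractionalIdeal_inv_ne_zero hJ) (fractionalIdeal_inv_ne_zero hI)
      (inv_anti_mono hI hJ h)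

theorem fractionalIdeal_inv_le_inv_iff (hI : I ≠ 0) (hJ : J ≠ 0) :
    I⁻¹ ≤ J⁻¹ ↔ divClosure J ≤ divClosure I := by
  refine ⟨inv_anti_mono (fractionalIdeal_inv_ne_zero hI) (fractionalIdeal_inv_ne_zero hJ),
    fun h ↦ ?_⟩
  rw [← inv_divClosure (I := I), ← inv_divClosure (I := J)]
  exact inv_anti_mono (ne_bot_of_le_ne_bot hJ le_divClosure)
    (ne_bot_of_le_ne_bot hI le_divClosure) h

theorem divClosure_le_of_le (h : I ≤ J) (hJ : divClosure J = J) : divClosure I ≤ J :=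
  (divClosure_mono h).trans_eq hJ

theorem divClosure_one : divClosure (1 : FractionalIdeal D⁰ K) = 1 := by
  simp [divClosure]

theorem divClosure_inf (hI : divClosure I = I) (hJ : divClosure J = J) :
    divClosure (I ⊓ J) = I ⊓ J :=
  (le_inf (divClosure_le_of_le inf_le_left hI) (divClosure_le_of_le inf_le_right hJ)).antisymm
    le_divClosure

theorem inv_spanSingleton_mul {c : K} (hc : c ≠ 0) :
    (spanSingleton D⁰ c * I)⁻¹ = spanSingleton D⁰ c⁻¹ * I⁻¹ := by
  obtain rfl | hI := eq_or_ne I 0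
  · simp [inv_zero']
  have hcI : spanSingleton D⁰ c * I ≠ 0 := mul_ne_zero (spanSingleton_ne_zero_iff.2 hc) hI
  have hcc : spanSingleton D⁰ c⁻¹ * spanSingleton D⁰ c = 1 := by
    simp [spanSingleton_mul_spanSingleton, hc]
  apply le_antisymm
  · calc (spanSingleton D⁰ c * I)⁻¹
        = spanSingleton D⁰ c⁻¹ * (spanSingleton D⁰ c * (spanSingleton D⁰ c * I)⁻¹) := by
          rw [← mul_assoc, hcc, one_mul]
      _ ≤ spanSingleton D⁰ c⁻¹ * I⁻¹ := by
          gcongr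
          rw [le_fractionalIdeal_inv_iff hI, mul_right_comm]
          exact mul_one_div_le_one
  · rw [le_fractionalIdeal_inv_iff hcI, mul_mul_mul_comm, hcc, one_mul, mul_comm]
    exact mul_one_div_le_one

theorem one_le_divClosure_of_inv_le_one (hI : I ≠ 0) (h : I⁻¹ ≤ 1) : 1 ≤ divClosure I :=
  (le_fractionalIdeal_inv_iff (fractionalIdeal_inv_ne_zero hI)).2 (by rwa [one_mul])

theorem inv_eq_divClosure_of_le_inv (hA : A ≤ I⁻¹) (hAI : (A * I)⁻¹ = 1) :
    I⁻¹ = divClosure A := by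
  have hAI0 : A * I ≠ 0 := by
    rintro h
    simp [h, inv_zero'] at hAI
  have hA0 : A ≠ 0 := left_ne_zero_of_mul hAI0
  refine le_antisymm ?_ (divClosure_le_of_le hA divClosure_inv)
  rw [divClosure, ← inv_eq, ← inv_eq,
    le_fractionalIdeal_inv_iff (fractionalIdeal_inv_ne_zero hA0), ← hAI,
    le_fractionalIdeal_inv_iff hAI0]
  calc I⁻¹ * A⁻¹ * (A * I) = (I * I⁻¹) * (A * A⁻¹) := by ring
    _ ≤ 1 := mul_le_one' mul_one_div_le_one mul_one_div_le_one

theorem divClosure_coeIdeal_eq_of_eq (L : Type*) [Field L] [Algebra D L] [IsFractionRing D L]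
    {A : Ideal D} (hA : divClosure (A : FractionalIdeal D⁰ K) = A) :
    divClosure (A : FractionalIdeal D⁰ L) = A := by
  have h := congrArg (FractionalIdeal.map (IsLocalization.algEquiv D⁰ K L : K →ₐ[D] L)) hA
  simpa [divClosure] using h

end FractionalIdeals

section PrimeIdeals

theorem isAntichain_isHeightOnePrime {R : Type*} [CommRing R] :
    IsAntichain (· ≤ ·) {P : Ideal R | IsHeightOnePrime P} :=
  fun P hP _ hQ hne hle ↦ hne (hQ.2.2 P hP.1 hP.2.1 hle)

variable {D K : Type*} [CommRing D] [IsDomain D] [Field K] [Algebra D K] [IsFractionRing D K]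
  {I : FractionalIdeal D⁰ K} {P Q : Ideal D}

theorem algebraMap_mul_mem_div_iff (hQ : Q.IsPrime) (hI : I ≠ 0) {x : K} (hx : x ∈ I⁻¹)
    {c : D} :
    algebraMap D K c * x ∈ (Q : FractionalIdeal D⁰ K) / I ↔
      c ∈ Q ∨ x ∈ (Q : FractionalIdeal D⁰ K) / I := by
  rw [← spanSingleton_le_iff_mem, le_fractionalIdeal_inv_iff hI] at hx
  rw [mem_fractionalIdeal_div_iff hI, mem_fractionalIdeal_div_iff hI,
    ← spanSingleton_mul_spanSingleton, mul_assoc,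
    ← spanSingleton_algebraMap_le_coeIdeal_iff (K := K)]
  refine ⟨le_coeIdeal_or_le_coeIdeal_of_mul_le hQ spanSingleton_algebraMap_le_one hx, ?_⟩
  rintro (h | h)
  · exact mul_le_of_le_of_le_one h hx
  · exact mul_le_of_le_one_of_le spanSingleton_algebraMap_le_one h

theorem exists_mem_inv_forall_notMem_div (hI : I ≠ 0) {T : Set (Ideal D)} (hT : T.Finite)
    (hprime : ∀ Q ∈ T, Q.IsPrime) (hanti : IsAntichain (· ≤ ·) T)
    (hTI : ∀ Q ∈ T, ¬ I⁻¹ ≤ (Q : FractionalIdeal D⁰ K) / I) :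
    ∃ a ∈ I⁻¹, ∀ Q ∈ T, a ∉ (Q : FractionalIdeal D⁰ K) / I := by
  lift T to Finset (Ideal D) using hT
  induction T using Finset.cons_induction with
  | empty => exact ⟨0, zero_mem _, by simp⟩
  | cons Q T hQT ih =>
    simp only [Finset.coe_cons, Set.forall_mem_insert, Finset.mem_coe] at hprime hanti hTI ⊢
    obtain ⟨a, ha, haT⟩ := ih hprime.2 (hanti.subset (Set.subset_insert _ _)) hTI.2
    by_cases haQ : a ∉ (Q : FractionalIdeal D⁰ K) / I
    · exact ⟨a, ha, haQ, haT⟩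
    rw [not_not] at haQ
    obtain ⟨b, hb, hbQ⟩ := SetLike.not_le_iff_exists.1 hTI.1
    have hTQ : ¬ T.inf id ≤ Q := by
      rw [hprime.1.inf_le']
      rintro ⟨Q', hQ', hle⟩
      exact hanti (.inr hQ') (.inl rfl) (ne_of_mem_of_not_mem hQ' hQT) hle
    obtain ⟨c, hcT, hcQ⟩ := SetLike.not_le_iff_exists.1 hTQ
    refine ⟨a + algebraMap D K c * b, ?_, ?_, fun Q' hQ' ↦ ?_⟩
    · rw [← Algebra.smul_def]
      exact Submodule.add_mem _ ha (Submodule.smul_mem _ c hb)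
    · rw [← mem_coe, Submodule.add_mem_iff_right _ haQ, mem_coe,
        algebraMap_mul_mem_div_iff hprime.1 hI hb]
      exact not_or.2 ⟨hcQ, hbQ⟩
    · have hcb := (algebraMap_mul_mem_div_iff (hprime.2 Q' hQ') hI hb).2
        (.inl (Submodule.mem_finsetInf.1 hcT Q' hQ'))
      rw [← mem_coe, Submodule.add_mem_iff_left _ hcb]
      exact haT Q' hQ'

theorem notMem_div_of_notMem_div_mul_inv (hQ : Q.IsPrime) (hPQ : ¬ P ≤ Q) (hP : P ≠ ⊥)
    (hI : I ≠ 0) {a : K} (ha : a ∈ (I * (P : FractionalIdeal D⁰ K)⁻¹)⁻¹)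
    (haQ : a ∉ (Q : FractionalIdeal D⁰ K) / (I * (P : FractionalIdeal D⁰ K)⁻¹)) :
    a ∉ (Q : FractionalIdeal D⁰ K) / I := by
  have hIP : I * (P : FractionalIdeal D⁰ K)⁻¹ ≠ 0 :=
    mul_ne_zero hI (fractionalIdeal_inv_ne_zero (coeIdeal_ne_zero.2 hP))
  rw [mem_fractionalIdeal_div_iff hI]
  rw [mem_fractionalIdeal_div_iff hIP] at haQ
  rw [← spanSingleton_le_iff_mem, le_fractionalIdeal_inv_iff hIP] at ha
  refine fun h ↦ (le_coeIdeal_or_le_coeIdeal_of_mul_le hQ ha coeIdeal_le_one ?_).elim haQ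
    fun h ↦ hPQ ((coeIdeal_le_coeIdeal K).1 h)
  calc spanSingleton D⁰ a * (I * (P : FractionalIdeal D⁰ K)⁻¹) * P
      = spanSingleton D⁰ a * I * (P * (P : FractionalIdeal D⁰ K)⁻¹) := by ring
    _ ≤ Q := mul_le_of_le_of_le_one h mul_one_div_le_one

theorem exists_mul_eq_algebraMap_of_notMem_div (hI : I ≠ 0) {b : K} (hb : b ∈ I⁻¹)
    (hbP : b ∉ (P : FractionalIdeal D⁰ K) / I) :
    ∃ y ∈ I, ∃ s ∉ P, b * y = algebraMap D K s := by
  simp only [mem_div_iff_of_ne_zero hI, not_forall, mem_coeIdeal] at hbP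
  obtain ⟨y, hy, hyP⟩ := hbP
  obtain ⟨s, hs⟩ := (mem_one_iff _).1 ((mem_inv_iff hI).1 hb y hy)
  exact ⟨y, hy, s, fun h ↦ hyP ⟨s, h, hs⟩, hs.symm⟩

theorem div_mem_primeLocSet (hI : I ≠ 0) {a b : K}
    (ha : a ∈ (P : FractionalIdeal D⁰ K) / I) (hb : b ∈ I⁻¹)
    (hbP : b ∉ (P : FractionalIdeal D⁰ K) / I) : a / b ∈ primeLocSet D K P := by
  have hb0 : b ≠ 0 := ne_of_mem_of_not_mem (FractionalIdeal.zero_mem _) hbP |>.symm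
  obtain ⟨y, hy, s, hs, hby⟩ := exists_mul_eq_algebraMap_of_notMem_div hI hb hbP
  obtain ⟨p, hp, hay⟩ := (mem_coeIdeal _).1 ((mem_div_iff_of_ne_zero hI).1 ha y hy)
  refine ⟨p, hp, s, hs, ?_⟩
  rw [← hby, hay]
  field_simp

theorem div_ne_mul_of_mem_primeLocSet (hP : P.IsPrime) (hP0 : P ≠ ⊥) (hI : I ≠ 0) {a b y z : K}
    (ha : a ∈ (I * (P : FractionalIdeal D⁰ K)⁻¹)⁻¹)
    (haP : a ∉ (P : FractionalIdeal D⁰ K) / (I * (P : FractionalIdeal D⁰ K)⁻¹))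
    (hb : b ∈ I⁻¹) (hb0 : b ≠ 0) (hy : y ∈ primeLocSet D K P) (hz : z ∈ primeLocSet D K P) :
    a / b ≠ y * z := by
  obtain ⟨p, hp, s, hs, hy⟩ := hy
  obtain ⟨q, hq, t, ht, hz⟩ := hz
  intro h
  have hIP : I * (P : FractionalIdeal D⁰ K)⁻¹ ≠ 0 :=
    mul_ne_zero hI (fractionalIdeal_inv_ne_zero (coeIdeal_ne_zero.2 hP0))
  have heq : algebraMap D K (s * t) * a = algebraMap D K p * algebraMap D K q * b := by
    rw [(div_eq_iff hb0).1 h, map_mul, ← hy, ← hz]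
    ring
  suffices hmem : algebraMap D K (s * t) * a ∈
      (P : FractionalIdeal D⁰ K) / (I * (P : FractionalIdeal D⁰ K)⁻¹) from
    ((algebraMap_mul_mem_div_iff hP hIP ha).1 hmem).elim (hP.mul_notMem hs ht) haP
  rw [heq, mem_fractionalIdeal_div_iff hIP, ← spanSingleton_mul_spanSingleton,
    ← spanSingleton_mul_spanSingleton]
  rw [← spanSingleton_le_iff_mem, le_fractionalIdeal_inv_iff hI] at hb
  rw [← spanSingleton_algebraMap_le_coeIdeal_iff (K := K)] at hp hq
  calc spanSingleton D⁰ (algebraMap D K p) * spanSingleton D⁰ (algebraMap D K q) *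
        spanSingleton D⁰ b * (I * (P : FractionalIdeal D⁰ K)⁻¹)
      = spanSingleton D⁰ (algebraMap D K q) * ((spanSingleton D⁰ b * I) *
        (spanSingleton D⁰ (algebraMap D K p) * (P : FractionalIdeal D⁰ K)⁻¹)) := by ring
    _ ≤ P := mul_le_of_le_of_le_one hq
        (mul_le_one' hb ((mul_le_mul_left hp _).trans mul_one_div_le_one))

theorem valOneAt_div (hP : P.IsPrime) (hP0 : P ≠ ⊥)
    (hPv : divClosure (P : FractionalIdeal D⁰ K) = P) (hI : I ≠ 0) {a b : K}
    (ha : a ∈ (I * (P : FractionalIdeal D⁰ K)⁻¹)⁻¹)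
    (haP : a ∉ (P : FractionalIdeal D⁰ K) / (I * (P : FractionalIdeal D⁰ K)⁻¹))
    (hb : b ∈ I⁻¹) (hbP : b ∉ (P : FractionalIdeal D⁰ K) / I) : valOneAt D P (a / b) := by
  have hP' := fractionalIdeal_inv_ne_zero (coeIdeal_ne_zero (K := K).2 hP0)
  have haI : a ∈ (P : FractionalIdeal D⁰ K) / I := by
    rw [mem_fractionalIdeal_div_iff hI, ← hPv]
    refine (le_fractionalIdeal_inv_iff hP').2 ?_
    rwa [mul_assoc, ← mem_fractionalIdeal_div_iff (mul_ne_zero hI hP')]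
  have hb0 : b ≠ 0 := ne_of_mem_of_not_mem (FractionalIdeal.zero_mem _) hbP |>.symm
  refine ⟨div_mem_primeLocSet hI haI hb hbP, ?_⟩
  rintro ⟨y, hy, z, hz, h⟩
  exact div_ne_mul_of_mem_primeLocSet hP hP0 hI ha haP hb hb0 hy hz h

end PrimeIdeals

section KrullDomains

variable {D K : Type*} [CommRing D] [IsDomain D] [Field K] [Algebra D K] [IsFractionRing D K]
  {I : FractionalIdeal D⁰ K} {P Q : Ideal D}

/-- Maximality among the nonzero proper divisorial integral ideals, the notion through which
divisorial ideals are linked to height-one primes. Integral ideals are encoded as fractional ideals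
contained in `1`. -/
def IsMaximalDivisorial (M : FractionalIdeal D⁰ K) : Prop :=
  Maximal (fun A ↦ A ≠ 0 ∧ A < 1 ∧ divClosure A = A) M

theorem IsMaximalDivisorial.not_inv_le_one {M : FractionalIdeal D⁰ K}
    (hM : IsMaximalDivisorial M) : ¬ M⁻¹ ≤ 1 := fun h ↦
  hM.prop.2.1.not_ge <| (one_le_divClosure_of_inv_le_one hM.prop.1 h).trans_eq hM.prop.2.2

theorem IsMaximalDivisorial.divClosure_sup_eq_one {M A : FractionalIdeal D⁰ K}
    (hM : IsMaximalDivisorial M) (hA : A ≤ 1) (hAM : ¬ A ≤ M) : divClosure (M ⊔ A) = 1 := by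
  have hle : M ⊔ A ≤ divClosure (M ⊔ A) := le_divClosure
  have h1 : divClosure (M ⊔ A) ≤ 1 :=
    divClosure_le_of_le (sup_le hM.prop.2.1.le hA) divClosure_one
  by_contra hne
  have hmem : divClosure (M ⊔ A) ≠ 0 ∧ divClosure (M ⊔ A) < 1 ∧
      divClosure (divClosure (M ⊔ A)) = divClosure (M ⊔ A) :=
    ⟨ne_bot_of_le_ne_bot hM.prop.1 (le_sup_left.trans hle), h1.lt_of_ne hne, divClosure_inv⟩
  exact hAM ((le_sup_right.trans hle).trans (hM.2 hmem (le_sup_left.trans hle)))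

theorem IsMaximalDivisorial.le_or_le_of_mul_le {M A B : FractionalIdeal D⁰ K}
    (hM : IsMaximalDivisorial M) (hA : A ≤ 1) (hB : B ≤ 1) (h : A * B ≤ M) :
    A ≤ M ∨ B ≤ M := by
  refine or_iff_not_imp_left.2 fun hAM ↦ ?_
  have hsup : (M ⊔ A)⁻¹ = 1 := by
    rw [← inv_divClosure, hM.divClosure_sup_eq_one hA hAM, inv_one]
  have hBM : B * M⁻¹ ≤ 1 := by
    rw [← hsup, le_fractionalIdeal_inv_sup_iff hM.prop.1]
    constructor
    · rw [mul_assoc]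
      exact mul_le_one' hB (by rw [mul_comm]; exact mul_one_div_le_one)
    · calc B * M⁻¹ * A = A * B * M⁻¹ := by ring
        _ ≤ M * M⁻¹ := mul_le_mul_left h _
        _ ≤ 1 := mul_one_div_le_one
  rw [← hM.prop.2.2]
  exact (le_fractionalIdeal_inv_iff (fractionalIdeal_inv_ne_zero hM.prop.1)).2 hBM

theorem IsMaximalDivisorial.isPrime (hP : IsMaximalDivisorial (P : FractionalIdeal D⁰ K)) :
    P.IsPrime := by
  refine ⟨?_, fun {x y} hxy ↦ ?_⟩
  · rintro rfl
    simpa using hP.prop.2.1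
  · simp only [← spanSingleton_algebraMap_le_coeIdeal_iff (K := K)] at hxy ⊢
    refine hP.le_or_le_of_mul_le spanSingleton_algebraMap_le_one
      spanSingleton_algebraMap_le_one ?_
    rwa [spanSingleton_mul_spanSingleton, ← map_mul]

theorem IsKrullDomain.mem_one_of_forall_mul_pow_mem_one (hD : IsKrullDomain D) {c : D}
    (hc : c ≠ 0) {x : K}
    (h : ∀ n : ℕ, algebraMap D K c * x ^ n ∈ (1 : FractionalIdeal D⁰ K)) :
    x ∈ (1 : FractionalIdeal D⁰ K) := by
  let e := (FractionRing.algEquiv D K).symm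
  obtain ⟨d, hd⟩ := hD.1 (e x) ⟨c, hc, fun n ↦ by
    obtain ⟨d, hd⟩ := (mem_one_iff _).1 (h n)
    exact ⟨d, by simpa using congrArg e hd⟩⟩
  exact (mem_one_iff _).2 ⟨d, e.injective (by simpa using hd)⟩

theorem IsKrullDomain.div_self (hD : IsKrullDomain D) (hI : I ≠ 0) : I / I = 1 := by
  refine le_antisymm (fun x hx ↦ ?_) ((le_div_iff_mul_le hI).2 (one_mul I).le)
  rw [mem_div_iff_of_ne_zero hI] at hx
  obtain ⟨y, hy0, hy⟩ := exists_ne_zero_mem_isInteger hI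
  have hpow (n : ℕ) : algebraMap D K y * x ^ n ∈ I := by
    induction n with
    | zero => simpa using hy
    | succ n ih => simpa only [pow_succ', mul_left_comm] using hx _ ih
  obtain ⟨d, hd, hdI⟩ := I.isFractional
  refine hD.mem_one_of_forall_mul_pow_mem_one
    (mul_ne_zero (nonZeroDivisors.ne_zero hd) hy0) fun n ↦ ?_
  obtain ⟨r, hr⟩ := hdI _ (hpow n)
  exact (mem_one_iff _).2 ⟨r, by rw [hr, Algebra.smul_def, map_mul, mul_assoc]⟩

theorem IsKrullDomain.inv_mul_inv_eq_one (hD : IsKrullDomain D) (hI : I ≠ 0) :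
    (I⁻¹ * I)⁻¹ = 1 := by
  have hI' := fractionalIdeal_inv_ne_zero hI
  have hII := mul_ne_zero hI' hI
  apply le_antisymm
  · rw [← hD.div_self hI', le_div_iff_mul_le hI', le_fractionalIdeal_inv_iff hI, mul_assoc,
      ← le_fractionalIdeal_inv_iff hII]
  · rw [le_fractionalIdeal_inv_iff hII, one_mul, mul_comm]
    exact mul_one_div_le_one

theorem IsKrullDomain.wellFoundedGT_divisorial (hD : IsKrullDomain D) :
    WellFoundedGT {A : FractionalIdeal D⁰ K // A ≤ 1 ∧ divClosure A = A} := by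
  rw [wellFoundedGT_iff_monotone_chain_condition]
  intro f
  choose g hg using fun n ↦ le_one_iff_exists_coeIdeal.1 (f n).2.1
  obtain ⟨n, hn⟩ := hD.2 g
    (fun n ↦ divClosure_coeIdeal_eq_of_eq _ (by rw [hg]; exact (f n).2.2))
    (fun n ↦ (coeIdeal_le_coeIdeal K).1 (by rw [hg, hg]; exact f.monotone n.le_succ))
  exact ⟨n, fun m hm ↦ Subtype.ext (by rw [← hg, ← hg, hn m hm])⟩

theorem IsKrullDomain.wellFoundedLT_divisorial_ge_spanSingleton (hD : IsKrullDomain D) {c : K}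
    (hc : c ≠ 0) :
    WellFoundedLT {A : FractionalIdeal D⁰ K // spanSingleton D⁰ c ≤ A ∧ divClosure A = A} := by
  have hc' : spanSingleton D⁰ c ≠ 0 := spanSingleton_ne_zero_iff.2 hc
  have := hD.wellFoundedGT_divisorial (K := K)
  have hne (A : {A : FractionalIdeal D⁰ K // spanSingleton D⁰ c ≤ A ∧ divClosure A = A}) :
      A.1 ≠ 0 := ne_bot_of_le_ne_bot hc' A.2.1
  let f : {A : FractionalIdeal D⁰ K // spanSingleton D⁰ c ≤ A ∧ divClosure A = A} →
      {A : FractionalIdeal D⁰ K // A ≤ 1 ∧ divClosure A = A} := fun A ↦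
    ⟨spanSingleton D⁰ c * A.1⁻¹, (mul_le_mul_left A.2.1 _).trans mul_one_div_le_one, by
      have h := inv_spanSingleton_mul (I := A.1) (inv_ne_zero hc)
      rw [inv_inv] at h
      rw [← h, divClosure_inv]⟩
  have hf (A B) : f A ≤ f B ↔ B ≤ A := by
    rw [← Subtype.coe_le_coe, ← Subtype.coe_le_coe, spanSingleton_mul_le_iff_right hc,
      fractionalIdeal_inv_le_inv_iff (hne A) (hne B), A.2.2, B.2.2]
  exact StrictAnti.wellFoundedLT (f := f) fun A B hAB ↦
    lt_of_le_not_ge ((hf B A).2 hAB.le) fun h ↦ hAB.not_ge ((hf A B).1 h)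

theorem IsKrullDomain.exists_isMaximalDivisorial_ge (hD : IsKrullDomain D)
    {A : FractionalIdeal D⁰ K} (hA0 : A ≠ 0) (hA1 : A < 1) (hA : divClosure A = A) :
    ∃ P : Ideal D, IsMaximalDivisorial (P : FractionalIdeal D⁰ K) ∧
      A ≤ (P : FractionalIdeal D⁰ K) := by
  have := hD.wellFoundedGT_divisorial (K := K)
  obtain ⟨M, hAM, ⟨hM1, hMmax⟩⟩ := exists_maximal_ge_of_wellFoundedGT
    (fun M : {A : FractionalIdeal D⁰ K // A ≤ 1 ∧ divClosure A = A} ↦ M.1 < 1)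
    ⟨A, hA1.le, hA⟩ hA1
  obtain ⟨P, hP⟩ := le_one_iff_exists_coeIdeal.1 M.2.1
  rw [← Subtype.coe_le_coe, ← hP] at hAM
  refine ⟨P, ⟨⟨ne_bot_of_le_ne_bot hA0 hAM, hP ▸ hM1, hP ▸ M.2.2⟩, fun B hB hPB ↦ ?_⟩, hAM⟩
  rw [hP] at hPB ⊢
  exact hMmax (y := ⟨B, hB.2.1.le, hB.2.2⟩) hB.2.1 hPB

theorem IsMaximalDivisorial.isHeightOnePrime (hD : IsKrullDomain D)
    (hP : IsMaximalDivisorial (P : FractionalIdeal D⁰ K)) : IsHeightOnePrime P := by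
  refine ⟨hP.isPrime, coeIdeal_ne_zero.1 hP.prop.1, fun Q hQ hQ0 hQP ↦ hQP.antisymm ?_⟩
  by_contra hPQ
  have hQ0' : (Q : FractionalIdeal D⁰ K) ≠ 0 := coeIdeal_ne_zero.2 hQ0
  rw [← coeIdeal_le_coeIdeal K] at hPQ hQP
  have hle : (Q : FractionalIdeal D⁰ K) * (P : FractionalIdeal D⁰ K)⁻¹ ≤ 1 :=
    (mul_le_mul_left hQP _).trans mul_one_div_le_one
  have hmul : (Q : FractionalIdeal D⁰ K) * (P : FractionalIdeal D⁰ K)⁻¹ * P ≤ Q := by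
    rw [mul_right_comm, mul_assoc]
    exact mul_le_of_le_one_right' mul_one_div_le_one
  have hQ' := (le_coeIdeal_or_le_coeIdeal_of_mul_le hQ hle coeIdeal_le_one hmul).resolve_right hPQ
  rw [mul_comm, ← le_div_iff_mul_le hQ0', hD.div_self hQ0'] at hQ'
  exact hP.not_inv_le_one hQ'

theorem IsKrullDomain.exists_divisorial_le_saturated (hD : IsKrullDomain D) (hP : P.IsPrime)
    (hP0 : P ≠ ⊥) :
    ∃ A : FractionalIdeal D⁰ K, A ≠ 0 ∧ divClosure A = A ∧ A ≤ (P : FractionalIdeal D⁰ K) ∧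
      ∀ t ∉ P, ∀ B ≤ 1, spanSingleton D⁰ (algebraMap D K t) * B ≤ A → B ≤ A := by
  obtain ⟨c, hcP, hc0⟩ := Submodule.exists_mem_ne_zero_of_ne_bot hP0
  have hc : algebraMap D K c ≠ 0 := by simpa using hc0
  have := hD.wellFoundedGT_divisorial (K := K)
  -- `A s` is the conductor `(cD : s)`; a maximal one with `s ∉ P` is the saturation `c D_P ∩ D`.
  let A (s : D) : FractionalIdeal D⁰ K :=
    (1 ⊔ spanSingleton D⁰ (algebraMap D K s / algebraMap D K c))⁻¹
  have hA_iff {B : FractionalIdeal D⁰ K} (s : D) : B ≤ A s ↔ B ≤ 1 ∧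
      B * spanSingleton D⁰ (algebraMap D K s) ≤ spanSingleton D⁰ (algebraMap D K c) :=
    le_inv_one_sup_spanSingleton_div_iff hc
  have hA (s : D) := (hA_iff s).1 le_rfl
  obtain ⟨s, hs, hmax⟩ := exists_maximalFor_of_wellFoundedGT (· ∉ P)
    (fun s ↦ (⟨A s, (hA s).1, divClosure_inv⟩ :
      {A : FractionalIdeal D⁰ K // A ≤ 1 ∧ divClosure A = A}))
    ⟨1, hP.one_notMem⟩
  refine ⟨A s, ?_, divClosure_inv, ?_, fun t ht B hB htB ↦ ?_⟩
  · exact ne_bot_of_le_ne_bot (spanSingleton_ne_zero_iff.2 hc) <| (hA_iff s).2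
      ⟨spanSingleton_algebraMap_le_one, mul_le_of_le_one_right' spanSingleton_algebraMap_le_one⟩
  · refine (le_coeIdeal_or_le_coeIdeal_of_mul_le hP (hA s).1 spanSingleton_algebraMap_le_one
      ((hA s).2.trans ?_)).resolve_right ?_ <;> rwa [spanSingleton_algebraMap_le_coeIdeal_iff]
  · have hst : spanSingleton D⁰ (algebraMap D K (t * s)) =
        spanSingleton D⁰ (algebraMap D K t) * spanSingleton D⁰ (algebraMap D K s) := by
      rw [spanSingleton_mul_spanSingleton, map_mul]
    have hAA : A s ≤ A (t * s) := (hA_iff _).2 ⟨(hA s).1, by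
      rw [hst, mul_left_comm]
      exact mul_le_of_le_one_of_le spanSingleton_algebraMap_le_one (hA s).2⟩
    have hBA : B ≤ A (t * s) := (hA_iff _).2 ⟨hB, by
      rw [hst, ← mul_assoc, mul_comm B]
      exact ((hA_iff s).1 htB).2⟩
    exact hBA.trans (hmax (hP.mul_notMem ht hs) hAA)

theorem IsHeightOnePrime.isMaximalDivisorial (hD : IsKrullDomain D)
    (hP : IsHeightOnePrime P) : IsMaximalDivisorial (P : FractionalIdeal D⁰ K) := by
  obtain ⟨A, hA0, hA, hAP, hsat⟩ := hD.exists_divisorial_le_saturated (K := K) hP.1 hP.2.1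
  have hA1 : A < 1 := hAP.trans_lt <|
    coeIdeal_le_one.lt_of_ne (coeIdeal_ne_one.2 (by rw [Ideal.one_eq_top]; exact hP.1.ne_top))
  obtain ⟨Q, hQ, hAQ⟩ := hD.exists_isMaximalDivisorial_ge hA0 hA1 hA
  suffices hQP : Q ≤ P from
    hP.2.2 Q hQ.isPrime (coeIdeal_ne_zero.1 hQ.prop.1) hQP ▸ hQ
  by_contra hQP
  obtain ⟨t, htQ, htP⟩ := SetLike.not_le_iff_exists.1 hQP
  rw [← spanSingleton_algebraMap_le_coeIdeal_iff (K := K)] at htQ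
  have hle : A * (Q : FractionalIdeal D⁰ K)⁻¹ ≤ 1 :=
    (mul_le_mul_left hAQ _).trans mul_one_div_le_one
  have hAA : A * (Q : FractionalIdeal D⁰ K)⁻¹ ≤ A := hsat t htP _ hle <|
    calc spanSingleton D⁰ (algebraMap D K t) * (A * (Q : FractionalIdeal D⁰ K)⁻¹)
        ≤ Q * (A * (Q : FractionalIdeal D⁰ K)⁻¹) := mul_le_mul_left htQ _
      _ = A * (Q * (Q : FractionalIdeal D⁰ K)⁻¹) := mul_left_comm _ _ _
      _ ≤ A := mul_le_of_le_one_right' mul_one_div_le_one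
  rw [mul_comm, ← le_div_iff_mul_le hA0, hD.div_self hA0] at hAA
  exact hQ.not_inv_le_one hAA

theorem IsKrullDomain.inv_eq_one_of_forall_not_le (hD : IsKrullDomain D) (hI0 : I ≠ 0)
    (hI1 : I ≤ 1)
    (h : ∀ P : Ideal D, IsHeightOnePrime P → ¬ I ≤ (P : FractionalIdeal D⁰ K)) : I⁻¹ = 1 := by
  have hle : divClosure I ≤ 1 := divClosure_le_of_le hI1 divClosure_one
  suffices divClosure I = 1 by rw [← inv_divClosure, this, inv_one]
  by_contra hne
  obtain ⟨P, hP, hIP⟩ := hD.exists_isMaximalDivisorial_ge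
    (ne_bot_of_le_ne_bot hI0 le_divClosure) (hle.lt_of_ne hne) divClosure_inv
  exact h P (hP.isHeightOnePrime hD) (le_divClosure.trans hIP)

theorem IsKrullDomain.exists_isHeightOnePrime (hD : IsKrullDomain D) (hD' : ¬ IsField D) :
    ∃ P : Ideal D, IsHeightOnePrime P := by
  obtain ⟨c, hc0, hc⟩ := Ring.exists_not_isUnit_of_not_isField hD'
  by_contra! h
  have hc' : algebraMap D (FractionRing D) c ≠ 0 := by simpa using hc0
  have hinv : (spanSingleton D⁰ (algebraMap D (FractionRing D) c))⁻¹ = 1 :=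
    hD.inv_eq_one_of_forall_not_le (spanSingleton_ne_zero_iff.2 hc')
      spanSingleton_algebraMap_le_one fun P hP ↦ (h P hP).elim
  have hmem :
      (algebraMap D (FractionRing D) c)⁻¹ ∈ (1 : FractionalIdeal D⁰ (FractionRing D)) := by
    rw [← hinv, spanSingleton_inv]
    exact mem_spanSingleton_self _ _
  obtain ⟨d, hd⟩ := (mem_one_iff _).1 hmem
  refine hc (IsUnit.of_mul_eq_one d ?_)
  apply IsFractionRing.injective D (FractionRing D)
  rw [map_mul, hd, mul_inv_cancel₀ hc', map_one]

theorem IsHeightOnePrime.not_inv_le_div (hD : IsKrullDomain D)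
    (hP : IsHeightOnePrime P) (hI : I ≠ 0) : ¬ I⁻¹ ≤ (P : FractionalIdeal D⁰ K) / I := by
  rw [le_div_iff_mul_le hI]
  intro h
  refine (hP.isMaximalDivisorial hD (K := K)).not_inv_le_one ?_
  rw [← hD.inv_mul_inv_eq_one hI]
  exact inv_anti_mono (mul_ne_zero (fractionalIdeal_inv_ne_zero hI) hI)
    (coeIdeal_ne_zero.2 hP.2.1) h

theorem IsKrullDomain.finite_setOf_isHeightOnePrime_mem (hD : IsKrullDomain D) {c : D}
    (hc : c ≠ 0) :
    {P : Ideal D | IsHeightOnePrime P ∧ c ∈ P}.Finite := by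
  have hc' : algebraMap D (FractionRing D) c ≠ 0 := by simpa using hc
  have := hD.wellFoundedLT_divisorial_ge_spanSingleton hc'
  obtain ⟨A, ⟨hA1, hAfin⟩, hAmin⟩ := exists_minimal_of_wellFoundedLT
    (fun A : {A : FractionalIdeal D⁰ (FractionRing D) //
        spanSingleton D⁰ (algebraMap D _ c) ≤ A ∧ divClosure A = A} ↦
      A.1 ≤ 1 ∧ {P : Ideal D | IsHeightOnePrime P ∧ A.1 ≤ P}.Finite)
    ⟨⟨1, spanSingleton_algebraMap_le_one, divClosure_one⟩, le_rfl, by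
      refine Set.finite_empty.subset fun P ⟨hP, h⟩ ↦ hP.1.ne_top ?_
      rw [← Ideal.one_eq_top, ← coeIdeal_eq_one (K := FractionRing D)]
      exact coeIdeal_le_one.antisymm h⟩
  refine hAfin.subset fun P ⟨hP, hcP⟩ ↦ ⟨hP, ?_⟩
  rw [← spanSingleton_algebraMap_le_coeIdeal_iff (K := FractionRing D)] at hcP
  suffices hAP : A.1 ≤ A.1 ⊓ P from hAP.trans inf_le_right
  refine hAmin (y := ⟨A.1 ⊓ P, le_inf A.2.1 hcP, divClosure_inf A.2.2
    (hP.isMaximalDivisorial hD).prop.2.2⟩) ⟨inf_le_left.trans hA1, ?_⟩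
    (Subtype.coe_le_coe.1 inf_le_left)
  refine (hAfin.insert P).subset fun Q ⟨hQ, hAPQ⟩ ↦ ?_
  have hmul : A.1 * P ≤ Q := le_trans (le_inf (mul_le_of_le_one_right' coeIdeal_le_one)
    (mul_le_of_le_one_left' hA1)) hAPQ
  obtain h | h := le_coeIdeal_or_le_coeIdeal_of_mul_le hQ.1 hA1 coeIdeal_le_one hmul
  · exact .inr ⟨hQ, h⟩
  · exact .inl (hQ.2.2 P hP.1 hP.2.1 ((coeIdeal_le_coeIdeal _).1 h)).symm

theorem IsKrullDomain.finite_setOf_isHeightOnePrime_mem_div (hD : IsKrullDomain D) (hI : I ≠ 0)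
    {b : K} (hb : b ≠ 0) :
    {P : Ideal D | IsHeightOnePrime P ∧ b ∈ (P : FractionalIdeal D⁰ K) / I}.Finite := by
  obtain ⟨y, hy0, hy⟩ := exists_ne_zero_mem_isInteger hI
  obtain ⟨n, d, hd, hnd⟩ := IsFractionRing.div_surjective (A := D) (b * algebraMap D K y)
  have hd0 : algebraMap D K d ≠ 0 := by simpa using nonZeroDivisors.ne_zero hd
  rw [div_eq_iff hd0] at hnd
  have hn : n ≠ 0 := by
    rintro rfl
    simp [hb, hy0, nonZeroDivisors.ne_zero hd] at hnd
  refine (hD.finite_setOf_isHeightOnePrime_mem hn).subset fun P ⟨hP, hbP⟩ ↦ ⟨hP, ?_⟩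
  have hmem := (mem_div_iff_of_ne_zero hI).1 hbP _ (Submodule.smul_mem _ d hy)
  rwa [Algebra.smul_def, mul_left_comm, mul_comm (algebraMap D K d), ← hnd,
    ← spanSingleton_le_iff_mem, spanSingleton_algebraMap_le_coeIdeal_iff] at hmem

theorem IsKrullDomain.inv_eq_divClosure_sup (hD : IsKrullDomain D) (hI : I ≠ 0) {a b : K}
    (ha : a ∈ I⁻¹) (hb : b ∈ I⁻¹) (hb0 : b ≠ 0)
    (h : ∀ Q : Ideal D, IsHeightOnePrime Q →
      b ∈ (Q : FractionalIdeal D⁰ K) / I → a ∉ (Q : FractionalIdeal D⁰ K) / I) :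
    I⁻¹ = divClosure (spanSingleton D⁰ a ⊔ spanSingleton D⁰ b) := by
  have hle : spanSingleton D⁰ a ⊔ spanSingleton D⁰ b ≤ I⁻¹ :=
    sup_le (spanSingleton_le_iff_mem.2 ha) (spanSingleton_le_iff_mem.2 hb)
  have hne : spanSingleton D⁰ a ⊔ spanSingleton D⁰ b ≠ 0 :=
    ne_bot_of_le_ne_bot (spanSingleton_ne_zero_iff.2 hb0) le_sup_right
  refine inv_eq_divClosure_of_le_inv hle (hD.inv_eq_one_of_forall_not_le (mul_ne_zero hne hI)
    ((le_fractionalIdeal_inv_iff hI).1 hle) fun Q hQ hle ↦ ?_)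
  rw [← le_div_iff_mul_le hI, sup_le_iff, spanSingleton_le_iff_mem,
    spanSingleton_le_iff_mem] at hle
  exact h Q hQ hle.2 hle.1

theorem approximation_lemma_general (hD : IsKrullDomain D) {P : Ideal D} (hP : IsHeightOnePrime P)
    {I : FractionalIdeal D⁰ K} (hI : I ≠ 0) :
    ∃ a b : K, 1 / I = divClosure (spanSingleton D⁰ a ⊔ spanSingleton D⁰ b) ∧
      valOneAt D P (a / b) := by
  have hIP : I * (P : FractionalIdeal D⁰ K)⁻¹ ≠ 0 :=
    mul_ne_zero hI (fractionalIdeal_inv_ne_zero (coeIdeal_ne_zero.2 hP.2.1))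
  obtain ⟨b, hb, hbP⟩ := SetLike.not_le_iff_exists.1 (hP.not_inv_le_div hD hI)
  have hb0 : b ≠ 0 := ne_of_mem_of_not_mem (FractionalIdeal.zero_mem _) hbP |>.symm
  let T : Set (Ideal D) := insert P {Q | IsHeightOnePrime Q ∧ b ∈ (Q : FractionalIdeal D⁰ K) / I}
  have hT : ∀ Q ∈ T, IsHeightOnePrime Q := by
    rintro Q (rfl | hQ)
    exacts [hP, hQ.1]
  have hTfin : T.Finite := (hD.finite_setOf_isHeightOnePrime_mem_div hI hb0).insert P
  obtain ⟨a, ha, haT⟩ := exists_mem_inv_forall_notMem_div hIP hTfin (fun Q hQ ↦ (hT Q hQ).1)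
    (isAntichain_isHeightOnePrime.subset hT) fun Q hQ ↦ (hT Q hQ).not_inv_le_div hD hIP
  refine ⟨a, b, hD.inv_eq_divClosure_sup hI ?_ hb hb0 fun Q hQ hbQ ↦ ?_,
    valOneAt_div hP.1 hP.2.1 (hP.isMaximalDivisorial hD).prop.2.2 hI ha (haT P (.inl rfl)) hb hbP⟩
  · refine inv_anti_mono hI hIP (le_mul_of_one_le_right' ?_) ha
    rw [le_fractionalIdeal_inv_iff (coeIdeal_ne_zero.2 hP.2.1), one_mul]
    exact coeIdeal_le_one
  · refine notMem_div_of_notMem_div_mul_inv hQ.1 (fun hPQ ↦ ?_) hP.2.1 hI ha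
      (haT Q (.inr ⟨hQ, hbQ⟩))
    exact hbP (hQ.2.2 P hP.1 hP.2.1 hPQ ▸ hbQ)

end KrullDomains

/-- **Lemma (first part).** Let `D` be a Krull domain with quotient field `K ≠ D` and `I`
a nonzero divisorial fractional ideal of `D`. Then there exist `a, b ∈ K` and a height-one
prime `P` of `D` such that `I⁻¹ = (aD + bD)_v` and `v_P(a/b) = 1`. -/
theorem approximation_lemma {D K : Type*} [CommRing D] [IsDomain D] [Field K] [Algebra D K]
    [IsFractionRing D K]
    (hD : IsKrullDomain D) (hDK : ¬ Function.Surjective (algebraMap D K))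
    (I : FractionalIdeal D⁰ K) (hI0 : I ≠ 0) (hIv : divClosure I = I) :
    ∃ (a b : K) (P : Ideal D), IsHeightOnePrime P ∧
      1 / I = divClosure (FractionalIdeal.spanSingleton D⁰ a ⊔
        FractionalIdeal.spanSingleton D⁰ b) ∧
      valOneAt D P (a / b) := by
  have hD' : ¬ IsField D := IsFractionRing.surjective_iff_isField.not.1 hDK
  obtain ⟨P, hP⟩ := hD.exists_isHeightOnePrime hD'
  obtain ⟨a, b, hab⟩ := approximation_lemma_general hD hP hI0
  exact ⟨a, b, P, hP, hab⟩

end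
end

section
/- Let S be a reduced, finitely generated, torsion-free, non-trivial Krull monoid whose quotient group G is a free abelian group of finite rank. Then there exists a ℤ-basis B of G such that B ∩ S ≠ ∅, i.e., G has a basis containing an element of S. -/
open scoped nonZeroDivisors

noncomputable section

/-!
A multiple of the denominator `b` of `g = a - b` witnesses that `g` is almost integral over `S` as
soon as `n • g ∈ S` for some `n ≠ 0`, so complete integral closure then gives `g ∈ S`. Hence it
suffices that some positive multiple of a basis element lies in `S`. Up to a sign, every nonzero `x`
is such a multiple: if `c` generates the ideal of all values `f x` of functionals `f`, then `x = c •
v` where `f v = 1` for some `f`, so that `v` together with a basis of `ker f` is a basis. In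
infinite rank, only the finitely many coordinates in the support of `x` have to be changed.
-/

section FreeModule

open Module Submodule

variable {ι R M : Type*} [CommRing R] [IsDomain R] [IsPrincipalIdealRing R]
  [AddCommGroup M] [Module R M]

theorem exists_smul_eq_and_dual_apply_eq_one (b : Basis ι R M) {x : M} (hx : x ≠ 0) :
    ∃ (c : R) (v : M) (f : Dual R M), c • v = x ∧ f v = 1 := by
  let I : Ideal R := LinearMap.range (Dual.eval R M x)
  let c : R := IsPrincipal.generator I
  obtain ⟨f, hf : f x = c⟩ : c ∈ I := IsPrincipal.generator_mem I
  have hdvd (i : ι) : c ∣ b.repr x i := (IsPrincipal.mem_iff_generator_dvd I).1 ⟨b.coord i, rfl⟩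
  choose q hq using hdvd
  let v : M := ∑ i ∈ (b.repr x).support, q i • b i
  have hcv : c • v = x := calc
    c • v = ∑ i ∈ (b.repr x).support, b.repr x i • b i := by
      simp only [v, Finset.smul_sum, smul_smul, hq]
    _ = x := b.linearCombination_repr x
  have hc : c ≠ 0 := by
    intro hc
    rw [hc, zero_smul] at hcv
    exact hx hcv.symm
  have hfv : c * f v = c := by rw [← smul_eq_mul, ← map_smul, hcv, hf]
  exact ⟨c, v, f, hcv, (mul_eq_left₀ hc).1 hfv⟩

theorem exists_basis_apply_eq_of_dual_apply_eq_one [Finite ι] (b₀ : Basis ι R M) {f : Dual R M}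
    {v : M} (hf : f v = 1) : ∃ (b : Basis ι R M) (i : ι), b i = v := by
  obtain ⟨n, ⟨bker⟩⟩ := nonempty_basis_of_pid b₀ (LinearMap.ker f)
  have hindep (c : R) (y : M) (hy : y ∈ LinearMap.ker f) (h : c • v + y = 0) : c = 0 := by
    simpa [hf, LinearMap.mem_ker.1 hy] using congrArg f h
  have hspan (z : M) : ∃ c : R, z + c • v ∈ LinearMap.ker f := ⟨-f z, by simp [hf]⟩
  let b : Basis (Fin (n + 1)) R M := .mkFinCons v bker hindep hspan
  let e : Fin (n + 1) ≃ ι := b.indexEquiv b₀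
  exact ⟨b.reindex e, e 0, by simp [b]⟩

theorem exists_basis_smul_eq_of_finite [Finite ι] (b₀ : Basis ι R M) {x : M} (hx : x ≠ 0) :
    ∃ (b : Basis ι R M) (i : ι) (c : R), c • b i = x := by
  obtain ⟨c, v, f, hcv, hfv⟩ := exists_smul_eq_and_dual_apply_eq_one b₀ hx
  obtain ⟨b, i, rfl⟩ := exists_basis_apply_eq_of_dual_apply_eq_one b₀ hfv
  exact ⟨b, i, c, hcv⟩

theorem exists_basis_smul_eq (b₀ : Basis ι R M) {x : M} (hx : x ≠ 0) :
    ∃ (b : Basis ι R M) (i : ι) (c : R), c • b i = x := by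
  classical
  let s : Set ι := (b₀.repr x).support
  let e : M ≃ₗ[R] (s →₀ R) × (↥sᶜ →₀ R) := b₀.repr ≪≫ₗ
    Finsupp.domLCongr (Equiv.Set.sumCompl s).symm ≪≫ₗ Finsupp.sumFinsuppLEquivProdFinsupp R
  have hsnd : (e x).2 = 0 := by
    ext j
    exact (Finsupp.notMem_support_iff.1 j.2 : b₀.repr x j = 0)
  have hfst : (e x).1 ≠ 0 := fun h ↦ hx (e.map_eq_zero_iff.1 (Prod.ext h hsnd))
  obtain ⟨b, i, c, hc⟩ := exists_basis_smul_eq_of_finite (Finsupp.basisSingleOne (R := R)) hfst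
  let b' : Basis (s ⊕ ↥sᶜ) R M := (b.prod Finsupp.basisSingleOne).map e.symm
  refine ⟨b'.reindex (Equiv.Set.sumCompl s), i, c, e.injective (Prod.ext ?_ ?_)⟩
  · simp [b', hc]
  · simp [b', hsnd]

end FreeModule

theorem exists_basis_nsmul_eq {ι G : Type*} [AddCommGroup G] (b₀ : Module.Basis ι ℤ G) {x : G}
    (hx : x ≠ 0) : ∃ (b : Module.Basis ι ℤ G) (i : ι) (n : ℕ), n • b i = x := by
  obtain ⟨b, i, c, hc⟩ := exists_basis_smul_eq b₀ hx
  obtain ⟨n, rfl | rfl⟩ := c.eq_nat_or_neg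
  · exact ⟨b, i, n, by simpa using hc⟩
  · exact ⟨b.map (LinearEquiv.neg ℤ), i, n, by simpa using hc⟩

theorem nsmul_add_nsmul_mem {G : Type*} [AddCommMonoid G] {S : AddSubmonoid G} {g b : G} {d : ℕ}
    (hd : d ≠ 0) (hdg : d • g ∈ S) (hb : b ∈ S) (hgb : g + b ∈ S) (n : ℕ) :
    d • b + n • g ∈ S := by
  obtain ⟨k, hk⟩ := Nat.exists_eq_add_of_le (Nat.mod_lt n (Nat.pos_of_ne_zero hd)).le
  have hdecomp : d • b + n • g = (n / d) • d • g + ((n % d) • (g + b) + k • b) := calc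
    d • b + n • g = (n % d + k) • b + (d * (n / d) + n % d) • g := by
      rw [← hk, Nat.div_add_mod]
    _ = (n / d) • d • g + ((n % d) • (g + b) + k • b) := by module
  rw [hdecomp]
  exact add_mem (nsmul_mem hdg _) (add_mem (nsmul_mem hgb _) (nsmul_mem hb _))

theorem nsmulSaturated_of_completelyIntegrallyClosed {G : Type*} [AddCommGroup G]
    {S : AddSubmonoid G} (hq : ∀ x : G, ∃ a ∈ S, ∃ b ∈ S, x = a - b)
    (hS : ∀ g : G, (∃ c ∈ S, ∀ n : ℕ, c + n • g ∈ S) → g ∈ S) : S.NSMulSaturated := by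
  intro d g hdg
  obtain ⟨a, ha, b, hb, hg⟩ := hq g
  have hgb : g + b ∈ S := by rwa [hg, sub_add_cancel]
  exact or_iff_not_imp_left.2 fun hd ↦
    hS g ⟨d • b, nsmul_mem hb d, nsmul_add_nsmul_mem hd hdg hb hgb⟩

theorem basis_meeting_monoid_general {ι G : Type*} [AddCommGroup G] (b₀ : Module.Basis ι ℤ G)
    {S : AddSubmonoid G} (hnt : S ≠ ⊥) (hS : S.NSMulSaturated) :
    ∃ (b : Module.Basis ι ℤ G) (i : ι), b i ∈ S := by
  obtain ⟨x, hxS, hx⟩ := S.bot_or_exists_ne_zero.resolve_left hnt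
  obtain ⟨b, i, n, rfl⟩ := exists_basis_nsmul_eq b₀ hx
  exact ⟨b, i, (hS hxS).resolve_left (left_ne_zero_of_smul hx)⟩

/-- **Claim A.** Let `S` be a reduced, finitely generated, torsion-free, non-trivial Krull
monoid whose quotient group `G` is a free abelian group of finite rank. Then `G` has a
`ℤ`-basis containing an element of `S`. -/
theorem basis_meeting_monoid {G : Type*} [AddCommGroup G] [Module.Free ℤ G]
    [Module.Finite ℤ G] (S : AddSubmonoid G)
    (hq : ∀ x : G, ∃ a ∈ S, ∃ b ∈ S, x = a - b)
    (hred : ∀ x : G, x ∈ S → -x ∈ S → x = 0)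
    (hfg : S.FG)
    (htf : IsAddTorsionFree G)
    (hnt : S ≠ ⊥)
    (hS : IsKrullMonoid S) :
    ∃ (n : ℕ) (b : Module.Basis (Fin n) ℤ G) (i : Fin n), b i ∈ S := by
  exact ⟨_, basis_meeting_monoid_general (Module.finBasis ℤ G) hnt
    (nsmulSaturated_of_completelyIntegrallyClosed hq hS.1)⟩

end
end

section
/- Let G be an abelian group and g ∈ G an element of infinite order, and let G_0 = {-2g, -g, g, 2g}. Let B(G_0) be the monoid of zero-sum sequences over G_0. Then B(G_0) is a finitely generated, reduced, torsion-free Krull monoid that is not factorial, and its set of height-one prime ideals is exactly {p_i : i ∈ G_0}, where p_i = {T ∈ B(G_0) : i ∈ supp(T)}. -/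
open scoped nonZeroDivisors

noncomputable section

/-- The localization `S_P = {s - t : s ∈ S, t ∈ S \ P}` of `S` at a prime ideal `P`,
as a subset of the ambient group. -/
def monLoc {G : Type*} [AddCommGroup G] (S : AddSubmonoid G) (P : Set G) : Set G :=
  {x : G | ∃ s ∈ S, ∃ t ∈ S, t ∉ P ∧ x = s - t}

/-- The maximal ideal `P + S_P` of the localization `S_P`, as a subset of the ambient
group. -/
def monLocMax {G : Type*} [AddCommGroup G] (S : AddSubmonoid G) (P : Set G) : Set G :=
  {x : G | ∃ u ∈ P, ∃ w ∈ monLoc S P, x = u + w}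

/-- `v_P(x) = 0` for the normalized `P`-adic valuation: `x` is a unit of the localization
`S_P`. -/
def mvalZero {G : Type*} [AddCommGroup G] (S : AddSubmonoid G) (P : Set G) (x : G) : Prop :=
  x ∈ monLoc S P ∧ -x ∈ monLoc S P

/-- `v_P(x) = 1` for the normalized `P`-adic valuation: `x ∈ P·S_P` but `x` is not a sum of
two elements of `P·S_P`. -/
def mvalOne {G : Type*} [AddCommGroup G] (S : AddSubmonoid G) (P : Set G) (x : G) : Prop :=
  x ∈ monLocMax S P ∧ ¬ ∃ y ∈ monLocMax S P, ∃ z ∈ monLocMax S P, x = y + z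

/-- `v_P(x) ≥ 2` for the normalized `P`-adic valuation: `x` is a sum of two elements of
`P·S_P`. -/
def mvalGeTwo {G : Type*} [AddCommGroup G] (S : AddSubmonoid G) (P : Set G) (x : G) : Prop :=
  ∃ y ∈ monLocMax S P, ∃ z ∈ monLocMax S P, x = y + z

/-- A (proper) prime ideal of the monoid `S`. -/
def IsMonoidPrimeIdeal {G : Type*} [AddCommGroup G] (S : AddSubmonoid G) (P : Set G) :
    Prop :=
  P ⊆ (S : Set G) ∧ (∀ p ∈ P, ∀ s ∈ S, p + s ∈ P) ∧ P ≠ (S : Set G) ∧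
    ∀ a ∈ S, ∀ b ∈ S, a + b ∈ P → a ∈ P ∨ b ∈ P

/-- A height-one prime ideal of the monoid `S`: a nonempty prime ideal that is minimal
among nonempty prime ideals. -/
def IsMonoidHeightOnePrime {G : Type*} [AddCommGroup G] (S : AddSubmonoid G) (P : Set G) :
    Prop :=
  IsMonoidPrimeIdeal S P ∧ P.Nonempty ∧
    ∀ Q : Set G, IsMonoidPrimeIdeal S Q → Q.Nonempty → Q ⊆ P → Q = P

/-- `p` divides `x` in the monoid `S`. -/
def monDvd {G : Type*} [AddCommGroup G] (S : AddSubmonoid G) (p x : G) : Prop :=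
  ∃ s ∈ S, x = p + s

/-- A prime element of the monoid `S`: a non-unit element of `S` such that whenever it
divides a sum of two elements of `S`, it divides one of them. -/
def IsMonoidPrimeElem {G : Type*} [AddCommGroup G] (S : AddSubmonoid G) (p : G) : Prop :=
  p ∈ S ∧ ¬ -p ∈ S ∧ ∀ a ∈ S, ∀ b ∈ S, monDvd S p (a + b) → monDvd S p a ∨ monDvd S p b

/-- The monoid `S` is factorial: every non-unit of `S` is a sum of prime elements
(equivalently, `S` is a Krull monoid with trivial divisor class group). -/
def IsMonoidFactorial {G : Type*} [AddCommGroup G] (S : AddSubmonoid G) : Prop :=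
  ∀ x ∈ S, ¬ -x ∈ S → ∃ l : Multiset G, (∀ p ∈ l, IsMonoidPrimeElem S p) ∧ l.sum = x


/-- The monoid `B(G₀)` of zero-sum sequences over a subset `G₀` of an abelian group `G`,
realized as the submonoid of the free abelian group `G →₀ ℤ` consisting of finitely
supported families of nonnegative multiplicities, supported in `G₀`, whose weighted sum
(the sum of the corresponding sequence) is zero. -/
noncomputable def zeroSumMonoid {G : Type*} [AddCommGroup G] (G₀ : Set G) : AddSubmonoid (G →₀ ℤ) where
  carrier := {f | (∀ x, 0 ≤ f x) ∧ (∀ x ∈ f.support, x ∈ G₀) ∧ f.sum (fun x n => n • x) = 0}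
  zero_mem' := ⟨fun x => le_refl 0, by simp, by simp⟩
  add_mem' := by
    rintro f h ⟨hf1, hf2, hf3⟩ ⟨hh1, hh2, hh3⟩
    refine ⟨fun x => by simpa using add_nonneg (hf1 x) (hh1 x), ?_, ?_⟩
    · intro x hx
      classical
      rcases Finset.mem_union.mp (Finsupp.support_add hx) with h' | h'
      exacts [hf2 x h', hh2 x h']
    · rw [Finsupp.sum_add_index' (fun x => zero_smul ℤ x) (fun x m n => add_smul m n x)]
      rw [hf3, hh3, add_zero]

/-!
`B(G₀)` is the positive cone of a subgroup of `G →₀ ℤ`, so divisibility in it is the pointwise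
order. By Dickson's lemma this order is a well-quasi-order when `G₀` is finite, which gives both
finite generation and the ascending chain condition on ideals.

Any nonempty prime ideal `P` contains some `p_i`: pick `p ∈ P`; if every `i ∈ supp p` occurred in
some `f_i ∉ P`, then `p` would divide a multiple of `∑ f_i ∉ P`. Hence the height-one primes are
the `p_i`, as soon as these are nonempty and pairwise incomparable.

For a symmetric `G₀`, both incomparability and the failure of factoriality follow from sequences
containing `x` but not `-x`: the sum of one such sequence for `x` and one for `-x` is divisible by
the atom `x · (-x)`, which divides neither of them. For `G₀ = {-2g, -g, g, 2g}` the sequences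
`(-2g) · g · g` and `(2g) · (-g) · (-g)` have this property whenever `2g ≠ 0`.
-/

section Submonoid

variable {A : Type*} [AddCommGroup A] {S : AddSubmonoid A} {P : Set A}

lemma add_mem_monDual {X : Set A} {s x : A} (hs : s ∈ S) (hx : x ∈ monDual S X) :
    s + x ∈ monDual S X := fun y hy => by
  rw [add_assoc]
  exact add_mem hs (hx y hy)

lemma isKrullMonoid_of_wellFoundedGT [WellFoundedGT (AddSemigroupIdeal S)]
    (hS : ∀ a : A, (∃ c ∈ S, ∀ n : ℕ, c + n • a ∈ S) → a ∈ S) : IsKrullMonoid S := by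
  refine ⟨hS, fun f hfS hdual hmono => ?_⟩
  have add_mem_f (n : ℕ) (s x : S) (hx : (x : A) ∈ f n) : ((s + x : S) : A) ∈ f n := by
    rw [← hdual n] at hx ⊢
    exact add_mem_monDual s.2 hx
  let I : ℕ →o AddSemigroupIdeal S :=
    { toFun := fun n => ⟨Subtype.val ⁻¹' f n, fun s x hx => add_mem_f n s x hx⟩
      monotone' := fun _ _ hmn _ hx => monotone_nat_of_le_succ hmono hmn hx }
  obtain ⟨n, hn⟩ := WellFoundedGT.monotone_chain_condition I
  refine ⟨n, fun m hnm => ?_⟩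
  have hpre : (Subtype.val ⁻¹' f m : Set S) = Subtype.val ⁻¹' f n :=
    congrArg SetLike.coe (hn m hnm).symm
  have hinter := Subtype.preimage_coe_eq_preimage_coe_iff.1 hpre
  rwa [Set.inter_eq_right.2 (hfS m), Set.inter_eq_right.2 (hfS n)] at hinter

lemma IsMonoidPrimeIdeal.zero_notMem (hP : IsMonoidPrimeIdeal S P) : (0 : A) ∉ P := fun h =>
  hP.2.2.1 <| hP.1.antisymm fun s hs => by simpa only [zero_add] using hP.2.1 0 h s hs

/-- The complement `S \ P` of a prime ideal, as a submonoid. -/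
def IsMonoidPrimeIdeal.compl (hP : IsMonoidPrimeIdeal S P) : AddSubmonoid A where
  carrier := (S : Set A) \ P
  zero_mem' := ⟨S.zero_mem, hP.zero_notMem⟩
  add_mem' {a b} ha hb := ⟨S.add_mem ha.1 hb.1, fun hab =>
    (hP.2.2.2 a ha.1 b hb.1 hab).elim ha.2 hb.2⟩

lemma IsMonoidFactorial.exists_prime_monDvd (hS : IsMonoidFactorial S) {x : A} (hx : x ∈ S)
    (hneg : -x ∉ S) : ∃ p, IsMonoidPrimeElem S p ∧ monDvd S p x := by
  obtain ⟨l, hl, rfl⟩ := hS x hx hneg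
  have hl0 : l ≠ 0 := by
    rintro rfl
    exact hneg (by simp only [Multiset.sum_zero, neg_zero, S.zero_mem])
  obtain ⟨p, hp⟩ := Multiset.exists_mem_of_ne_zero hl0
  obtain ⟨l', rfl⟩ := Multiset.exists_cons_of_mem hp
  exact ⟨p, hl p hp, l'.sum, S.multiset_sum_mem _ fun q hq =>
    (hl q (Multiset.mem_cons_of_mem hq)).1, Multiset.sum_cons p l'⟩

end Submonoid

lemma nonneg_of_forall_nonneg_add_nsmul {M : Type*} [AddCommGroup M] [LinearOrder M]
    [IsOrderedAddMonoid M] [Archimedean M] {c a : M} (h : ∀ n : ℕ, 0 ≤ c + n • a) : 0 ≤ a := by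
  by_contra! ha
  obtain ⟨n, hn⟩ := exists_lt_nsmul (neg_pos.2 ha) c
  rw [smul_neg, lt_neg_iff_add_neg] at hn
  exact hn.not_ge (h n)

lemma exists_le_nsmul_of_support {ι : Type*} {p t : ι →₀ ℤ} (ht : 0 ≤ t)
    (hpt : ∀ i ∈ p.support, t i ≠ 0) : ∃ N : ℕ, p ≤ N • t := by
  refine ⟨p.support.sup fun i => (p i).toNat, fun i => ?_⟩
  simp only [Finsupp.smul_apply, nsmul_eq_mul]
  by_cases hi : i ∈ p.support
  · calc p i ≤ ((p i).toNat : ℤ) := Int.self_le_toNat _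
      _ ≤ (p.support.sup fun i => (p i).toNat : ℕ) :=
        mod_cast Finset.le_sup (f := fun i => (p i).toNat) hi
      _ ≤ _ := le_mul_of_one_le_right (Int.natCast_nonneg _)
        (Order.one_le_iff_pos.2 ((ht i).lt_of_ne' (hpt i hi)))
  · rw [Finsupp.notMem_support_iff.1 hi]
    exact mul_nonneg (Int.natCast_nonneg _) (ht i)

section ZeroSumMonoid

variable {G : Type*} [AddCommGroup G] {G₀ : Set G}

/-- The zero-sum families over `G₀` with multiplicities of arbitrary sign. The monoid `B(G₀)` is
the cone of nonnegative elements of this lattice. -/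
def zeroSumLattice (G₀ : Set G) : Submodule ℤ (G →₀ ℤ) :=
  Finsupp.supported ℤ ℤ G₀ ⊓ LinearMap.ker (Finsupp.linearCombination ℤ (id : G → G))

lemma mem_zeroSumMonoid_iff {f : G →₀ ℤ} :
    f ∈ zeroSumMonoid G₀ ↔ 0 ≤ f ∧ f ∈ zeroSumLattice G₀ := Iff.rfl

lemma mem_of_mem_zeroSumMonoid_of_apply_ne_zero {f : G →₀ ℤ} {x : G}
    (hf : f ∈ zeroSumMonoid G₀) (hx : f x ≠ 0) : x ∈ G₀ :=
  (Finsupp.mem_supported ℤ f).1 hf.2.1 (Finsupp.mem_support_iff.2 hx)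

lemma sub_mem_zeroSumMonoid {f h : G →₀ ℤ} (hf : f ∈ zeroSumMonoid G₀)
    (hh : h ∈ zeroSumMonoid G₀) (hle : h ≤ f) : f - h ∈ zeroSumMonoid G₀ :=
  ⟨sub_nonneg.2 hle, (zeroSumLattice G₀).sub_mem hf.2 hh.2⟩

lemma monDvd_zeroSumMonoid_iff_le {f h : G →₀ ℤ} (hf : f ∈ zeroSumMonoid G₀)
    (hh : h ∈ zeroSumMonoid G₀) : monDvd (zeroSumMonoid G₀) f h ↔ f ≤ h := by
  constructor
  · rintro ⟨s, hs, rfl⟩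
    exact le_add_of_nonneg_right hs.1
  · exact fun hle => ⟨h - f, sub_mem_zeroSumMonoid hh hf hle, (add_sub_cancel f h).symm⟩

lemma eq_zero_of_neg_mem_zeroSumMonoid {f : G →₀ ℤ} (hf : f ∈ zeroSumMonoid G₀)
    (hneg : -f ∈ zeroSumMonoid G₀) : f = 0 :=
  le_antisymm (neg_nonneg.1 hneg.1) hf.1

lemma mem_zeroSumMonoid_of_forall_add_nsmul_mem {c f : G →₀ ℤ}
    (h : ∀ n : ℕ, c + n • f ∈ zeroSumMonoid G₀) : f ∈ zeroSumMonoid G₀ := by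
  refine ⟨fun x => nonneg_of_forall_nonneg_add_nsmul fun n => (h n).1 x, ?_⟩
  have hmem : (c + 1 • f) - (c + 0 • f) ∈ zeroSumLattice G₀ :=
    (zeroSumLattice G₀).sub_mem (h 1).2 (h 0).2
  rwa [one_smul, zero_smul, add_sub_add_left_eq_sub, sub_zero] at hmem

instance : CanonicallyOrderedAdd (zeroSumMonoid G₀) where
  exists_add_of_le {f h} hle :=
    ⟨⟨h - f, sub_mem_zeroSumMonoid h.2 f.2 hle⟩, Subtype.ext (add_sub_cancel _ _).symm⟩
  le_add_self _ h := le_add_of_nonneg_left h.2.1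
  le_self_add _ h := le_add_of_nonneg_right h.2.1

lemma wellQuasiOrderedLE_zeroSumMonoid (hG₀ : G₀.Finite) :
    WellQuasiOrderedLE (zeroSumMonoid G₀) := by
  have : Finite G₀ := hG₀
  refine ⟨fun f => ?_⟩
  obtain ⟨m, n, hmn, hle⟩ :=
    wellQuasiOrdered_le fun (k : ℕ) (x : G₀) => ((f k : G →₀ ℤ) x).toNat
  refine ⟨m, n, hmn, fun x => ?_⟩
  by_cases hx : x ∈ G₀
  · exact (Int.toNat_le.1 (hle ⟨x, hx⟩)).trans_eq (Int.toNat_of_nonneg ((f n).2.1 x))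
  · have hfx : (f m : G →₀ ℤ) x = 0 :=
      not_not.1 fun h => hx (mem_of_mem_zeroSumMonoid_of_apply_ne_zero (f m).2 h)
    exact hfx.trans_le ((f n).2.1 x)

lemma zeroSumMonoid_fg (hG₀ : G₀.Finite) : (zeroSumMonoid G₀).FG :=
  have := wellQuasiOrderedLE_zeroSumMonoid hG₀
  (AddMonoid.fg_iff_addSubmonoid_fg _).1 AddCommMonoid.fg_of_wellQuasiOrderedLE

lemma isKrullMonoid_zeroSumMonoid (hG₀ : G₀.Finite) : IsKrullMonoid (zeroSumMonoid G₀) :=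
  have := wellQuasiOrderedLE_zeroSumMonoid hG₀
  isKrullMonoid_of_wellFoundedGT fun _ ⟨_, _, h⟩ =>
    mem_zeroSumMonoid_of_forall_add_nsmul_mem h

/-- The prime ideal `p_i = {T ∈ B(G₀) : i ∈ supp T}`; it is empty if `i` occurs in no zero-sum
sequence over `G₀`. -/
def supportPrime (G₀ : Set G) (i : G) : Set (G →₀ ℤ) :=
  {f | f ∈ zeroSumMonoid G₀ ∧ f i ≠ 0}

lemma isMonoidPrimeIdeal_supportPrime (i : G) :
    IsMonoidPrimeIdeal (zeroSumMonoid G₀) (supportPrime G₀ i) := by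
  refine ⟨fun f hf => hf.1, fun p hp s hs => ⟨add_mem hp.1 hs, ?_⟩, fun heq => ?_,
    fun a ha b hb hab => ?_⟩
  · exact (add_pos_of_pos_of_nonneg ((hp.1.1 i).lt_of_ne' hp.2) (hs.1 i)).ne'
  · exact (heq ▸ (zeroSumMonoid G₀).zero_mem : (0 : G →₀ ℤ) ∈ supportPrime G₀ i).2 rfl
  · by_contra! hnot
    have hai : a i = 0 := not_not.1 fun h => hnot.1 ⟨ha, h⟩
    have hbi : b i = 0 := not_not.1 fun h => hnot.2 ⟨hb, h⟩
    exact hab.2 (by rw [Finsupp.add_apply, hai, hbi, add_zero])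

lemma IsMonoidPrimeIdeal.mem_of_le {P : Set (G →₀ ℤ)}
    (hP : IsMonoidPrimeIdeal (zeroSumMonoid G₀) P) {p f : G →₀ ℤ} (hp : p ∈ P)
    (hf : f ∈ zeroSumMonoid G₀) (hle : p ≤ f) : f ∈ P := by
  simpa only [add_sub_cancel] using
    hP.2.1 p hp (f - p) (sub_mem_zeroSumMonoid hf (hP.1 hp) hle)

lemma exists_supportPrime_subset {P : Set (G →₀ ℤ)}
    (hP : IsMonoidPrimeIdeal (zeroSumMonoid G₀) P) (hne : P.Nonempty) :
    ∃ i ∈ G₀, supportPrime G₀ i ⊆ P := by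
  obtain ⟨p, hp⟩ := hne
  by_contra! hnot
  have exists_compl : ∀ i ∈ p.support, ∃ f ∈ hP.compl, f i ≠ 0 := fun i hi =>
    have hiG₀ := mem_of_mem_zeroSumMonoid_of_apply_ne_zero (hP.1 hp) (Finsupp.mem_support_iff.1 hi)
    have ⟨f, hf, hfP⟩ := Set.not_subset.1 (hnot i hiG₀)
    ⟨f, ⟨hf.1, hfP⟩, hf.2⟩
  choose! f hf hfi using exists_compl
  have hsum : ∑ i ∈ p.support, f i ∈ hP.compl := sum_mem hf
  have hsum_ne : ∀ i ∈ p.support, (∑ j ∈ p.support, f j) i ≠ 0 := fun i hi => by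
    have hle : f i ≤ ∑ j ∈ p.support, f j :=
      Finset.single_le_sum (fun j hj => (hf j hj).1.1) hi
    exact (((hf i hi).1.1 i).lt_of_ne' (hfi i hi) |>.trans_le (hle i)).ne'
  obtain ⟨N, hN⟩ := exists_le_nsmul_of_support hsum.1.1 hsum_ne
  have hmul := hP.compl.nsmul_mem hsum N
  exact hmul.2 (hP.mem_of_le hp hmul.1 hN)

lemma setOf_isMonoidHeightOnePrime_zeroSumMonoid
    (hne : ∀ i ∈ G₀, (supportPrime G₀ i).Nonempty)
    (hinj : ∀ i ∈ G₀, ∀ j ∈ G₀, supportPrime G₀ i ⊆ supportPrime G₀ j → i = j) :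
    {P | IsMonoidHeightOnePrime (zeroSumMonoid G₀) P} =
      {P | ∃ i ∈ G₀, P = supportPrime G₀ i} := by
  ext P
  constructor
  · rintro ⟨hP, hPne, hmin⟩
    obtain ⟨i, hi, hiP⟩ := exists_supportPrime_subset hP hPne
    exact ⟨i, hi, (hmin _ (isMonoidPrimeIdeal_supportPrime i) (hne i hi) hiP).symm⟩
  · rintro ⟨i, hi, rfl⟩
    refine ⟨isMonoidPrimeIdeal_supportPrime i, hne i hi, fun Q hQ hQne hQi => ?_⟩
    obtain ⟨j, hj, hjQ⟩ := exists_supportPrime_subset hQ hQne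
    obtain rfl := hinj j hj i hi (hjQ.trans hQi)
    exact hQi.antisymm hjQ

end ZeroSumMonoid

section NegPair

variable {G : Type*} [AddCommGroup G] {G₀ : Set G} {x : G}

/-- The sequence `x · (-x)` of length two. -/
def negPair (x : G) : G →₀ ℤ := Finsupp.single x 1 + Finsupp.single (-x) 1

lemma negPair_neg (x : G) : negPair (-x) = negPair x := by
  rw [negPair, negPair, neg_neg, add_comm]

lemma negPair_apply_ne_zero (x : G) : negPair x x ≠ 0 := by
  classical
  simp only [negPair, Finsupp.add_apply, Finsupp.single_apply]
  split_ifs <;> simp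

lemma negPair_apply_of_ne {y : G} (hx : y ≠ x) (hneg : y ≠ -x) : negPair x y = 0 := by
  simp only [negPair, Finsupp.add_apply, Finsupp.single_eq_of_ne hx, Finsupp.single_eq_of_ne hneg,
    add_zero]

lemma negPair_mem (hx : x ∈ G₀) (hneg : -x ∈ G₀) : negPair x ∈ zeroSumMonoid G₀ := by
  refine mem_zeroSumMonoid_iff.2 ⟨?_, add_mem (Finsupp.single_mem_supported ℤ 1 hx)
    (Finsupp.single_mem_supported ℤ 1 hneg), ?_⟩
  · exact add_nonneg (Finsupp.single_nonneg.2 zero_le_one) (Finsupp.single_nonneg.2 zero_le_one)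
  · simp [negPair]

lemma eq_zero_of_le_single_one (hx : x ≠ 0) {p : G →₀ ℤ} (hp : p ∈ zeroSumMonoid G₀)
    (hle : p ≤ Finsupp.single x 1) : p = 0 := by
  have hps : p = Finsupp.single x (p x) := by
    ext y
    obtain rfl | hy := eq_or_ne y x
    · rw [Finsupp.single_eq_same]
    · have := hle y
      rw [Finsupp.single_eq_of_ne hy] at this ⊢
      exact this.antisymm (hp.1 y)
  have hsum : p x • x = 0 := by
    have := hp.2.2
    rwa [hps, Finsupp.sum_single_index (zero_smul ℤ x)] at this
  have hpx : p x ≠ 1 := fun h => hx (by rwa [h, one_smul] at hsum)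
  have hle_one : p x ≤ 1 := by simpa only [Finsupp.single_eq_same] using hle x
  have hnonneg : 0 ≤ p x := hp.1 x
  rw [hps, show p x = 0 by lia, Finsupp.single_zero]

lemma apply_ne_zero_of_le_negPair (hx : x ≠ 0) {p : G →₀ ℤ} (hp : p ∈ zeroSumMonoid G₀)
    (hp0 : p ≠ 0) (hle : p ≤ negPair x) : p x ≠ 0 := fun hpx =>
  hp0 <| eq_zero_of_le_single_one (neg_ne_zero.2 hx) hp fun y => by
    obtain rfl | hy := eq_or_ne y x
    · rw [hpx]
      exact Finsupp.single_nonneg.2 zero_le_one y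
    · simpa only [negPair, Finsupp.add_apply, Finsupp.single_eq_of_ne hy, zero_add] using hle y

lemma negPair_le_add {a b : G →₀ ℤ} (hx : -x ≠ x) (ha : 0 ≤ a) (hb : 0 ≤ b) (hax : a x ≠ 0)
    (hbx : b (-x) ≠ 0) : negPair x ≤ a + b := by
  classical
  intro y
  have hay := ha y
  have hby := hb y
  simp only [negPair, Finsupp.add_apply, Finsupp.single_apply, Finsupp.coe_zero,
    Pi.zero_apply] at hay hby ⊢
  split_ifs <;> grind

lemma not_isMonoidFactorial_zeroSumMonoid (hx : -x ≠ x)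
    (ha : ∃ a ∈ zeroSumMonoid G₀, a x ≠ 0 ∧ a (-x) = 0)
    (hb : ∃ b ∈ zeroSumMonoid G₀, b (-x) ≠ 0 ∧ b x = 0) :
    ¬ IsMonoidFactorial (zeroSumMonoid G₀) := by
  obtain ⟨a, ha, hax, hanx⟩ := ha
  obtain ⟨b, hb, hbnx, hbx⟩ := hb
  intro hfac
  have hx0 : x ≠ 0 := by
    rintro rfl
    exact hx neg_zero
  have hpair : negPair x ∈ zeroSumMonoid G₀ :=
    negPair_mem (mem_of_mem_zeroSumMonoid_of_apply_ne_zero ha hax)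
      (mem_of_mem_zeroSumMonoid_of_apply_ne_zero hb hbnx)
  have hpair_neg : -negPair x ∉ zeroSumMonoid G₀ := fun h =>
    negPair_apply_ne_zero x (by rw [eq_zero_of_neg_mem_zeroSumMonoid hpair h, Finsupp.zero_apply])
  obtain ⟨p, ⟨hp, hp_neg, hprime⟩, hdvd⟩ := hfac.exists_prime_monDvd hpair hpair_neg
  have hle : p ≤ negPair x := (monDvd_zeroSumMonoid_iff_le hp hpair).1 hdvd
  have hp0 : p ≠ 0 := by
    rintro rfl
    exact hp_neg (by rwa [neg_zero])
  have hpx : p x ≠ 0 := apply_ne_zero_of_le_negPair hx0 hp hp0 hle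
  have hpnx : p (-x) ≠ 0 :=
    apply_ne_zero_of_le_negPair (neg_ne_zero.2 hx0) hp hp0 (hle.trans_eq (negPair_neg x).symm)
  have hle_add : p ≤ a + b := hle.trans (negPair_le_add hx ha.1 hb.1 hax hbnx)
  rcases hprime a ha b hb ((monDvd_zeroSumMonoid_iff_le hp (add_mem ha hb)).2 hle_add) with h | h
  · have hpa : p (-x) ≤ a (-x) := (monDvd_zeroSumMonoid_iff_le hp ha).1 h (-x)
    exact hpnx ((hpa.trans_eq hanx).antisymm (hp.1 _))
  · have hpb : p x ≤ b x := (monDvd_zeroSumMonoid_iff_le hp hb).1 h x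
    exact hpx ((hpb.trans_eq hbx).antisymm (hp.1 _))

lemma supportPrime_nonempty (hx : x ∈ G₀) (hneg : -x ∈ G₀) : (supportPrime G₀ x).Nonempty :=
  ⟨negPair x, negPair_mem hx hneg, negPair_apply_ne_zero x⟩

lemma eq_of_supportPrime_subset {i j : G} (hi : i ∈ G₀) (hneg : -i ∈ G₀)
    (hsep : -i ≠ i → ∃ f ∈ zeroSumMonoid G₀, f i ≠ 0 ∧ f (-i) = 0)
    (hij : supportPrime G₀ i ⊆ supportPrime G₀ j) : i = j := by
  by_contra! hne
  have hj : j = -i := by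
    by_contra hjneg
    exact (hij ⟨negPair_mem hi hneg, negPair_apply_ne_zero i⟩).2
      (negPair_apply_of_ne hne.symm hjneg)
  subst hj
  obtain ⟨f, hf, hfi, hfneg⟩ := hsep hne.symm
  exact (hij ⟨hf, hfi⟩).2 hfneg

end NegPair

section DoublingTriple

variable {G : Type*} [AddCommGroup G] {G₀ : Set G} {x : G}

/-- The sequence `(-2x) · x · x` of length three. -/
def doublingTriple (x : G) : G →₀ ℤ :=
  Finsupp.single (-((2 : ℤ) • x)) 1 + Finsupp.single x 2

lemma doublingTriple_mem (hx : x ∈ G₀) (hdouble : -((2 : ℤ) • x) ∈ G₀) :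
    doublingTriple x ∈ zeroSumMonoid G₀ := by
  refine mem_zeroSumMonoid_iff.2 ⟨?_, add_mem (Finsupp.single_mem_supported ℤ 1 hdouble)
    (Finsupp.single_mem_supported ℤ 2 hx), ?_⟩
  · exact add_nonneg (Finsupp.single_nonneg.2 zero_le_one) (Finsupp.single_nonneg.2 zero_le_two)
  · simp [doublingTriple]

lemma doublingTriple_apply_ne_zero {y : G} (hy : y = x ∨ y = -((2 : ℤ) • x)) :
    doublingTriple x y ≠ 0 := by
  classical
  simp only [doublingTriple, Finsupp.add_apply, Finsupp.single_apply]
  split_ifs <;> grind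

lemma doublingTriple_apply_of_ne {y : G} (hdouble : y ≠ -((2 : ℤ) • x)) (hx : y ≠ x) :
    doublingTriple x y = 0 := by
  simp only [doublingTriple, Finsupp.add_apply, Finsupp.single_eq_of_ne hdouble,
    Finsupp.single_eq_of_ne hx, add_zero]

lemma exists_apply_ne_zero_and_apply_neg_eq_zero (hx : x ∈ G₀) (hdouble : -((2 : ℤ) • x) ∈ G₀)
    (hx2 : (2 : ℤ) • x ≠ 0) {y : G} (hy : y = x ∨ y = -((2 : ℤ) • x)) (hyneg : -y ≠ y) :
    ∃ f ∈ zeroSumMonoid G₀, f y ≠ 0 ∧ f (-y) = 0 := by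
  have hx0 : x ≠ 0 := by
    rintro rfl
    exact hx2 (smul_zero _)
  refine ⟨doublingTriple x, doublingTriple_mem hx hdouble, doublingTriple_apply_ne_zero hy, ?_⟩
  obtain rfl | rfl := hy
  · refine doublingTriple_apply_of_ne (fun h => hx0 ?_) hyneg
    rwa [neg_inj, two_zsmul, left_eq_add] at h
  · refine doublingTriple_apply_of_ne hyneg fun h => hx0 ?_
    rwa [neg_neg, two_zsmul, add_eq_left] at h

/-- The set `{-2g, -g, g, 2g}`. -/
abbrev doublingSet (g : G) : Set G := {-((2 : ℤ) • g), -g, g, (2 : ℤ) • g}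

lemma neg_mem_doublingSet {g : G} (hx : x ∈ doublingSet g) : -x ∈ doublingSet g := by
  rcases hx with rfl | rfl | rfl | rfl <;> simp

lemma exists_separating_of_mem_doublingSet {g : G} (hg : (2 : ℤ) • g ≠ 0)
    (hx : x ∈ doublingSet g) (hneg : -x ≠ x) :
    ∃ f ∈ zeroSumMonoid (doublingSet g), f x ≠ 0 ∧ f (-x) = 0 := by
  have hcases : (x = g ∨ x = -((2 : ℤ) • g)) ∨ (x = -g ∨ x = -((2 : ℤ) • -g)) := by
    rw [smul_neg, neg_neg]
    simp only [Set.mem_insert_iff, Set.mem_singleton_iff] at hx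
    tauto
  rcases hcases with h | h
  · exact exists_apply_ne_zero_and_apply_neg_eq_zero (by simp) (by simp) hg h hneg
  · refine exists_apply_ne_zero_and_apply_neg_eq_zero (by simp) (by simp) ?_ h hneg
    rwa [smul_neg, neg_ne_zero]

end DoublingTriple

theorem zero_sum_monoid_properties_general {G : Type*} [AddCommGroup G] (g : G)
    (hg : (2 : ℤ) • g ≠ 0) :
    (zeroSumMonoid (doublingSet g)).FG ∧
    (∀ f : G →₀ ℤ, f ∈ zeroSumMonoid (doublingSet g) →
      -f ∈ zeroSumMonoid (doublingSet g) → f = 0) ∧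
    (∀ n : ℕ, n ≠ 0 → ∀ f ∈ zeroSumMonoid (doublingSet g),
      ∀ f' ∈ zeroSumMonoid (doublingSet g), n • f = n • f' → f = f') ∧
    IsKrullMonoid (zeroSumMonoid (doublingSet g)) ∧
    ¬ IsMonoidFactorial (zeroSumMonoid (doublingSet g)) ∧
    {P : Set (G →₀ ℤ) | IsMonoidHeightOnePrime (zeroSumMonoid (doublingSet g)) P} =
      {P : Set (G →₀ ℤ) | ∃ i ∈ doublingSet g,
        P = {f : G →₀ ℤ | f ∈ zeroSumMonoid (doublingSet g) ∧ f i ≠ 0}} := by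
  have hfin : (doublingSet g).Finite := Set.toFinite _
  have hmem : g ∈ doublingSet g := by simp
  have hg' : -g ≠ g := fun h => hg (by rw [two_zsmul, ← neg_eq_iff_add_eq_zero, h])
  have hsep {x : G} (hx : x ∈ doublingSet g) := exists_separating_of_mem_doublingSet hg hx
  refine ⟨zeroSumMonoid_fg hfin, fun f => eq_zero_of_neg_mem_zeroSumMonoid,
    fun n hn f _ f' _ h => nsmul_right_injective hn h, isKrullMonoid_zeroSumMonoid hfin,
    not_isMonoidFactorial_zeroSumMonoid hg' (hsep hmem hg') ?_,
    setOf_isMonoidHeightOnePrime_zeroSumMonoid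
      (fun i hi => supportPrime_nonempty hi (neg_mem_doublingSet hi))
      fun i hi j _ => eq_of_supportPrime_subset hi (neg_mem_doublingSet hi) (hsep hi)⟩
  simpa only [neg_neg] using hsep (neg_mem_doublingSet hmem) (by rwa [neg_neg, ne_comm])

/-- **Counterexample setup.** Let `G` be an abelian group, `g ∈ G` of infinite order, and
`G₀ = {-2g, -g, g, 2g}`. Then the monoid `B(G₀)` of zero-sum sequences over `G₀` is a
finitely generated, reduced, torsion-free Krull monoid that is not factorial, and its
height-one prime ideals are exactly the sets `p_i = {T ∈ B(G₀) : i ∈ supp T}`, `i ∈ G₀`. -/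
theorem zero_sum_monoid_properties {G : Type*} [AddCommGroup G] (g : G)
    (hg : ¬ IsOfFinAddOrder g) :
    (zeroSumMonoid ({-((2 : ℤ) • g), -g, g, (2 : ℤ) • g} : Set G)).FG ∧
    (∀ f : G →₀ ℤ, f ∈ zeroSumMonoid ({-((2 : ℤ) • g), -g, g, (2 : ℤ) • g} : Set G) →
      -f ∈ zeroSumMonoid ({-((2 : ℤ) • g), -g, g, (2 : ℤ) • g} : Set G) → f = 0) ∧
    (∀ n : ℕ, n ≠ 0 → ∀ f ∈ zeroSumMonoid ({-((2 : ℤ) • g), -g, g, (2 : ℤ) • g} : Set G),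
      ∀ f' ∈ zeroSumMonoid ({-((2 : ℤ) • g), -g, g, (2 : ℤ) • g} : Set G),
      n • f = n • f' → f = f') ∧
    IsKrullMonoid (zeroSumMonoid ({-((2 : ℤ) • g), -g, g, (2 : ℤ) • g} : Set G)) ∧
    ¬ IsMonoidFactorial (zeroSumMonoid ({-((2 : ℤ) • g), -g, g, (2 : ℤ) • g} : Set G)) ∧
    {P : Set (G →₀ ℤ) |
        IsMonoidHeightOnePrime (zeroSumMonoid ({-((2 : ℤ) • g), -g, g, (2 : ℤ) • g} : Set G)) P} =
      {P : Set (G →₀ ℤ) | ∃ i ∈ ({-((2 : ℤ) • g), -g, g, (2 : ℤ) • g} : Set G),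
        P = {f : G →₀ ℤ |
          f ∈ zeroSumMonoid ({-((2 : ℤ) • g), -g, g, (2 : ℤ) • g} : Set G) ∧ f i ≠ 0}} :=
  zero_sum_monoid_properties_general g fun h =>
    hg (isOfFinAddOrder_iff_zsmul_eq_zero.2 ⟨2, two_ne_zero, h⟩)

end
end

section
/- Let G be an abelian group, g ∈ G an element of infinite order, G_0 = {-2g,-g,g,2g}, and B(G_0) the Krull monoid of zero-sum sequences over G_0 with height-one prime ideals p_i = {T ∈ B(G_0) : i ∈ supp(T)} for i ∈ G_0. Let α_1 = (-2g)·(-2g)·(2g)·(2g)·(-g)·(-g)·g·g ∈ B(G_0) and α_2 = α_1·α_1. Then for every a ∈ B(G_0) and every i ∈ G_0, the element α_2 + a - α_1 of the quotient group of B(G_0) has p_i-adic valuation at least 2. In particular, there is no a ∈ B(G_0) such that α_2 + a - α_1 has p_i-adic valuation at most 1 for some i ∈ G_0 (contradicting Lemma 7 of Chang). -/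
open scoped nonZeroDivisors

noncomputable section

/-!
The sequence `α₁` is the square of the zero-sum sequence `β = (-2g)·(-g)·g·(2g)`, and `β` lies in
every `p_i` because each `i ∈ G₀` occurs in it. Hence `α₂ + a - α₁ = β + (β + a)` is a sum of two
elements of `p_i`.
-/

section Valuation

variable {H : Type*} [AddCommGroup H] {S : AddSubmonoid H} {P : Set H} {s u v : H}

lemma mem_monLoc_of_mem (h0 : (0 : H) ∉ P) (hs : s ∈ S) : s ∈ monLoc S P :=
  ⟨s, hs, 0, zero_mem S, h0, (sub_zero s).symm⟩

lemma add_mem_monLocMax (h0 : (0 : H) ∉ P) (hu : u ∈ P) (hs : s ∈ S) :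
    u + s ∈ monLocMax S P :=
  ⟨u, hu, s, mem_monLoc_of_mem h0 hs, rfl⟩

lemma mem_monLocMax_of_mem (h0 : (0 : H) ∉ P) (hu : u ∈ P) : u ∈ monLocMax S P :=
  add_zero u ▸ add_mem_monLocMax h0 hu (zero_mem S)

lemma mvalGeTwo_add_add (h0 : (0 : H) ∉ P) (hu : u ∈ P) (hv : v ∈ P) (hs : s ∈ S) :
    mvalGeTwo S P (u + v + s) :=
  ⟨u, mem_monLocMax_of_mem h0 hu, v + s, add_mem_monLocMax h0 hv hs, add_assoc u v s⟩

end Valuation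

section ZeroSum

variable {G : Type*}

/-- The family of multiplicities of a finite multiset, i.e. a sequence over `G` viewed as an
element of the free abelian group `G →₀ ℤ` in which `zeroSumMonoid` lives. -/
def multiplicities (s : Multiset G) : G →₀ ℤ :=
  (s.map fun x => Finsupp.single x 1).sum

lemma multiplicities_zero : multiplicities (0 : Multiset G) = 0 := rfl

lemma multiplicities_cons (x : G) (s : Multiset G) :
    multiplicities (x ::ₘ s) = Finsupp.single x 1 + multiplicities s := by
  simp [multiplicities]

lemma multiplicities_singleton (x : G) : multiplicities {x} = Finsupp.single x 1 := by
  simp [multiplicities]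

lemma multiplicities_apply [DecidableEq G] (s : Multiset G) (x : G) :
    multiplicities s x = s.count x := by
  induction s using Multiset.induction with
  | empty => simp [multiplicities_zero]
  | cons y s ih =>
    simp [multiplicities_cons, ih, Multiset.count_cons, Finsupp.single_apply, eq_comm, add_comm]

lemma multiplicities_ne_zero_iff {s : Multiset G} {x : G} : multiplicities s x ≠ 0 ↔ x ∈ s := by
  classical
  simp [multiplicities_apply]

variable [AddCommGroup G]

lemma sum_multiplicities (s : Multiset G) :
    ((multiplicities s).sum fun x n => n • x) = s.sum := by
  change Finsupp.linearCombination ℤ id (multiplicities s) = s.sum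
  simp [multiplicities, map_multiset_sum]

lemma mem_zeroSumMonoid_iff_s13 {G₀ : Set G} {f : G →₀ ℤ} :
    f ∈ zeroSumMonoid G₀ ↔
      (∀ x, 0 ≤ f x) ∧ (∀ x, f x ≠ 0 → x ∈ G₀) ∧ (f.sum fun x n => n • x) = 0 := by
  simp only [← Finsupp.mem_support_iff]
  rfl

lemma multiplicities_mem_zeroSumMonoid_iff {G₀ : Set G} {s : Multiset G} :
    multiplicities s ∈ zeroSumMonoid G₀ ↔ (∀ x ∈ s, x ∈ G₀) ∧ s.sum = 0 := by
  classical
  have hnonneg (x : G) : 0 ≤ multiplicities s x := by simp [multiplicities_apply]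
  simp only [mem_zeroSumMonoid_iff_s13, hnonneg, implies_true, true_and, multiplicities_ne_zero_iff,
    sum_multiplicities]

lemma mvalGeTwo_zeroSumMonoid_add_add {G₀ : Set G} {a b c : G →₀ ℤ} {i : G}
    (hb : b ∈ zeroSumMonoid G₀) (hbi : b i ≠ 0) (hc : c ∈ zeroSumMonoid G₀) (hci : c i ≠ 0)
    (ha : a ∈ zeroSumMonoid G₀) :
    mvalGeTwo (zeroSumMonoid G₀) {t : G →₀ ℤ | t ∈ zeroSumMonoid G₀ ∧ t i ≠ 0} (b + c + a) :=
  mvalGeTwo_add_add (fun h => h.2 rfl) ⟨hb, hbi⟩ ⟨hc, hci⟩ ha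

end ZeroSum

theorem counterexample_to_chang_general {G : Type*} [AddCommGroup G] (g : G)
    (G₀ : Set G) (hG₀ : G₀ = {-((2 : ℤ) • g), -g, g, (2 : ℤ) • g})
    (α₁ α₂ : G →₀ ℤ)
    (hα₁ : α₁ = Finsupp.single (-((2 : ℤ) • g)) 2 + Finsupp.single ((2 : ℤ) • g) 2 +
      Finsupp.single (-g) 2 + Finsupp.single g 2)
    (hα₂ : α₂ = α₁ + α₁) :
    (∀ a ∈ zeroSumMonoid G₀, ∀ i ∈ G₀,
      mvalGeTwo (zeroSumMonoid G₀) {t : G →₀ ℤ | t ∈ zeroSumMonoid G₀ ∧ t i ≠ 0}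
        (α₂ + a - α₁)) ∧
    ¬ ∃ a ∈ zeroSumMonoid G₀, ∃ i ∈ G₀,
      ¬ mvalGeTwo (zeroSumMonoid G₀) {t : G →₀ ℤ | t ∈ zeroSumMonoid G₀ ∧ t i ≠ 0}
        (α₂ + a - α₁) := by
  let s : Multiset G := {-((2 : ℤ) • g), -g, g, (2 : ℤ) • g}
  have hα₁_eq : α₁ = multiplicities s + multiplicities s := by
    simp only [hα₁, s, Multiset.insert_eq_cons, multiplicities_cons, multiplicities_singleton,
      ← one_add_one_eq_two (R := ℤ), Finsupp.single_add]
    abel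
  have hG₀_eq (x : G) : x ∈ G₀ ↔ x ∈ s := by simp [hG₀, s]
  have hs : multiplicities s ∈ zeroSumMonoid G₀ :=
    multiplicities_mem_zeroSumMonoid_iff.mpr ⟨fun x => (hG₀_eq x).mpr, by simp [s]⟩
  have hval : ∀ a ∈ zeroSumMonoid G₀, ∀ i ∈ G₀,
      mvalGeTwo (zeroSumMonoid G₀) {t : G →₀ ℤ | t ∈ zeroSumMonoid G₀ ∧ t i ≠ 0}
        (α₂ + a - α₁) := by
    intro a ha i hi
    have hquot : α₂ + a - α₁ = multiplicities s + multiplicities s + a := by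
      rw [hα₂, ← hα₁_eq]
      abel
    have hsi : multiplicities s i ≠ 0 := multiplicities_ne_zero_iff.mpr ((hG₀_eq i).mp hi)
    exact hquot ▸ mvalGeTwo_zeroSumMonoid_add_add hs hsi hs hsi ha
  exact ⟨hval, fun ⟨a, ha, i, hi, h⟩ => h (hval a ha i hi)⟩

/-- **Counterexample to Chang's Lemma 7.** Let `G` be an abelian group, `g ∈ G` of infinite
order, `G₀ = {-2g, -g, g, 2g}`, `B(G₀)` the Krull monoid of zero-sum sequences over `G₀`
with height-one primes `p_i = {T ∈ B(G₀) : i ∈ supp T}` for `i ∈ G₀`. Let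
`α₁ = (-2g)(-2g)(2g)(2g)(-g)(-g)(g)(g)` and `α₂ = α₁·α₁`. Then for every `a ∈ B(G₀)` and
every `i ∈ G₀`, the element `α₂ + a - α₁` of the quotient group of `B(G₀)` has `p_i`-adic
valuation at least `2`; in particular there is no `a ∈ B(G₀)` such that `α₂ + a - α₁` has
`p_i`-adic valuation at most `1` for some `i ∈ G₀`. -/
theorem counterexample_to_chang {G : Type*} [AddCommGroup G] (g : G)
    (hg : ¬ IsOfFinAddOrder g)
    (G₀ : Set G) (hG₀ : G₀ = {-((2 : ℤ) • g), -g, g, (2 : ℤ) • g})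
    (α₁ α₂ : G →₀ ℤ)
    (hα₁ : α₁ = Finsupp.single (-((2 : ℤ) • g)) 2 + Finsupp.single ((2 : ℤ) • g) 2 +
      Finsupp.single (-g) 2 + Finsupp.single g 2)
    (hα₂ : α₂ = α₁ + α₁) :
    (∀ a ∈ zeroSumMonoid G₀, ∀ i ∈ G₀,
      mvalGeTwo (zeroSumMonoid G₀) {t : G →₀ ℤ | t ∈ zeroSumMonoid G₀ ∧ t i ≠ 0}
        (α₂ + a - α₁)) ∧
    ¬ ∃ a ∈ zeroSumMonoid G₀, ∃ i ∈ G₀,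
      ¬ mvalGeTwo (zeroSumMonoid G₀) {t : G →₀ ℤ | t ∈ zeroSumMonoid G₀ ∧ t i ≠ 0}
        (α₂ + a - α₁) :=
  counterexample_to_chang_general g G₀ hG₀ α₁ α₂ hα₁ hα₂

end
end
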